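/- arXiv:1910.00173 — 3 statements merged into one kernel-verified Lean document; each statement's English description precedes it below -/
import Mathlib

section
/- There is an absolute constant C such that for every α ∈ (0, 1/1000], every integer 0 ≤ m ≤ 3, every λ with (γ−σ)/2 ≤ λ ≤ 1/2, and every m-times continuously differentiable f with compact support contained in (0,∞)×(0,π/2): ‖f‖_{H^m(ψ)} ≤ C ‖f‖_{H^m} and ‖sin(β)^λ f‖_{H^m} ≤ C ‖f‖_{H^m(ψ)}. -/
open Real MeasureTheory Set

noncomputable section

namespace Paper

/-- The domain `(0,∞) × (0,π/2)` in the `(R,β)` variables. -/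
def Qdom : Set (ℝ × ℝ) := Set.Ioi (0:ℝ) ×ˢ Set.Ioo (0:ℝ) (Real.pi/2)

/-- Inner product `⟨f,g⟩ = ∫₀^∞ ∫₀^{π/2} f g dβ dR`. -/
def inner2 (f g : ℝ → ℝ → ℝ) : ℝ :=
  ∫ R in Set.Ioi (0:ℝ), ∫ β in Set.Ioo (0:ℝ) (Real.pi/2), f R β * g R β

/-- The `L²` norm `‖f‖₂`. -/
def norm2 (f : ℝ → ℝ → ℝ) : ℝ := Real.sqrt (inner2 f f)

/-- `‖h‖_{L²(R)}` for functions of `R` alone. -/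
def normR (h : ℝ → ℝ) : ℝ := Real.sqrt (∫ R in Set.Ioi (0:ℝ), (h R)^2)

/-- `D_R = R ∂_R`. -/
def DR (f : ℝ → ℝ → ℝ) : ℝ → ℝ → ℝ := fun R β => R * deriv (fun r => f r β) R

/-- `D_R` for functions of `R` alone. -/
def DR1 (h : ℝ → ℝ) : ℝ → ℝ := fun R => R * deriv h R

/-- `D_β = sin(2β) ∂_β`. -/
def Dbeta (f : ℝ → ℝ → ℝ) : ℝ → ℝ → ℝ :=
  fun R β => Real.sin (2*β) * deriv (fun b => f R b) β

/-- `L₁₂(Ω)(R) = ∫_R^∞ ∫₀^{π/2} Ω(s,β) sin(2β) s⁻¹ dβ ds`. -/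
def L12 (Ω : ℝ → ℝ → ℝ) (R : ℝ) : ℝ :=
  ∫ s in Set.Ioi R, ∫ β in Set.Ioo (0:ℝ) (Real.pi/2), Ω s β * Real.sin (2*β) / s

/-- `L̃₁₂(Ω)(R) = L₁₂(Ω)(R) − L₁₂(Ω)(0)`. -/
def tL12 (Ω : ℝ → ℝ → ℝ) (R : ℝ) : ℝ := L12 Ω R - L12 Ω 0

/-- Compact support contained in the open domain `(0,∞)×(0,π/2)`. -/
def suppIn (f : ℝ → ℝ → ℝ) : Prop :=
  ∃ K : Set (ℝ × ℝ), IsCompact K ∧ K ⊆ Qdom ∧ ∀ x y : ℝ, (x, y) ∉ K → f x y = 0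

/-- Integrability over the domain. -/
def Integrable2 (f : ℝ → ℝ → ℝ) : Prop :=
  MeasureTheory.IntegrableOn (Function.uncurry f) Qdom

/-- `Γ(β) = (cos β)^α`. -/
def Γf (α : ℝ) (β : ℝ) : ℝ := Real.cos β ^ α

/-- The normalizing constant `c = (2/π)∫₀^{π/2} Γ(β) sin(2β) dβ`. -/
def cst (α : ℝ) : ℝ :=
  (2/Real.pi) * ∫ β in Set.Ioo (0:ℝ) (Real.pi/2), Γf α β * Real.sin (2*β)

/-- The approximate profile `Ω̄`. -/
def Ωbar (α : ℝ) : ℝ → ℝ → ℝ := fun R β => (α / cst α) * Γf α β * (3*R/(1+R)^2)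

/-- The approximate profile `η̄`. -/
def ηbar (α : ℝ) : ℝ → ℝ → ℝ := fun R β => (α / cst α) * Γf α β * (6*R/(1+R)^3)

/-- The singular weight `φ₁ = (1+R)⁴R⁻⁴ sin(2β)^{-σ}`, `σ = 99/100`. -/
def phi1 : ℝ → ℝ → ℝ := fun R β => (1+R)^4 / R^4 * Real.sin (2*β) ^ (-(99/100 : ℝ))

/-- The singular weight `φ₂ = (1+R)⁴R⁻⁴ sin(2β)^{-γ}`, `γ = 1 + α/10`. -/
def phi2 (α : ℝ) : ℝ → ℝ → ℝ := fun R β => (1+R)^4 / R^4 * Real.sin (2*β) ^ (-(1 + α/10))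

/-- The singular weight `ψ₁ = (1+R)⁴R⁻⁴ (sin β cos β)^{-σ}`. -/
def psi1 : ℝ → ℝ → ℝ := fun R β =>
  (1+R)^4 / R^4 * (Real.sin β * Real.cos β) ^ (-(99/100 : ℝ))

/-- The singular weight `ψ₂ = (1+R)⁴R⁻⁴ (sin β)^{-σ}(cos β)^{-γ}`. -/
def psi2 (α : ℝ) : ℝ → ℝ → ℝ := fun R β =>
  (1+R)^4 / R^4 * Real.sin β ^ (-(99/100 : ℝ)) * Real.cos β ^ (-(1 + α/10))

/-- `c_ω = −(2/(πα)) L₁₂(Ω)(0)`. -/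
def cω (α : ℝ) (Ω : ℝ → ℝ → ℝ) : ℝ := -(2/(Real.pi*α)) * L12 Ω 0

/-- The linearized operator `L₁`. -/
def opL1 (α : ℝ) (Ω η : ℝ → ℝ → ℝ) : ℝ → ℝ → ℝ := fun R β =>
  - DR Ω R β - (3/(1+R)) * Dbeta Ω R β - Ω R β + η R β
  + cω α Ω * (Ωbar α R β - DR (Ωbar α) R β)

/-- The linearized operator `L₂`. -/
def opL2 (α : ℝ) (Ω η : ℝ → ℝ → ℝ) : ℝ → ℝ → ℝ := fun R β =>
  - DR η R β - (3/(1+R)) * Dbeta η R β + (-2 + 3/(1+R)) * η R β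
  + (2/(Real.pi*α)) * tL12 Ω R * ηbar α R β
  + cω α Ω * (ηbar α R β - DR (ηbar α) R β)

/-- `ξ̄` in Cartesian variables. -/
def ξbarC (α : ℝ) (x y : ℝ) : ℝ :=
  -(18*α^2 / cst α) * ∫ z in Set.Ioo (0:ℝ) x,
      (y/(y^2+z^2)) * (z ^ α * (z^2+y^2) ^ (α/2) / (1 + (z^2+y^2) ^ (α/2))^4)

/-- `ξ̄` in the `(R,β)` variables, via `x = R^{1/α} cos β`, `y = R^{1/α} sin β`. -/
def ξbar (α : ℝ) : ℝ → ℝ → ℝ := fun R β =>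
  ξbarC α (R ^ (1/α) * Real.cos β) (R ^ (1/α) * Real.sin β)

/-- The linearized operator `L₃`. -/
def opL3 (α : ℝ) (Ω ξ : ℝ → ℝ → ℝ) : ℝ → ℝ → ℝ := fun R β =>
  - DR ξ R β - (3/(1+R)) * Dbeta ξ R β + (-2 - 3/(1+R)) * ξ R β
  - (2/(Real.pi*α)) * tL12 Ω R * ξbar α R β
  + cω α Ω * (3 * ξbar α R β - DR (ξbar α) R β)

/-- Weighted Sobolev norm `H^m` with radial weight `w1` and angular weight `w2`:
`‖f‖ = Σ_{0≤k≤m} ‖(D_R^k f)√w1‖₂ + Σ_{i+j≤m−1} ‖(D_R^i D_β^{j+1} f)√w2‖₂`. -/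
def Hnorm (m : ℕ) (w1 w2 : ℝ → ℝ → ℝ) (f : ℝ → ℝ → ℝ) : ℝ :=
  (∑ k ∈ Finset.range (m+1),
    norm2 (fun R β => DR^[k] f R β * Real.sqrt (w1 R β)))
  + ∑ p ∈ (Finset.range (m+1) ×ˢ Finset.range (m+1)).filter
      (fun p => p.1 + p.2 + 1 ≤ m),
      norm2 (fun R β => DR^[p.1] (Dbeta^[p.2+1] f) R β * Real.sqrt (w2 R β))

/-- Sup of `|f|` over the domain `(0,∞)×(0,π/2)`. -/
def supDom (f : ℝ → ℝ → ℝ) : ℝ :=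
  ⨆ (R : Set.Ioi (0:ℝ)) (β : Set.Ioo (0:ℝ) (Real.pi/2)), |f R.1 β.1|

/-- The weighted `C¹` norm. -/
def C1norm (α : ℝ) (f : ℝ → ℝ → ℝ) : ℝ :=
  supDom f + supDom (fun R β => (1+R)/R * DR f R β)
  + supDom (fun R β =>
      (1 + (R * Real.sin (2*β) ^ α) ^ (-(1/40 : ℝ))) * Dbeta f R β)

/-- Boundedness of `f` on the domain. -/
def BddDom (f : ℝ → ℝ → ℝ) : Prop :=
  ∃ M : ℝ, ∀ R ∈ Set.Ioi (0:ℝ), ∀ β ∈ Set.Ioo (0:ℝ) (Real.pi/2), |f R β| ≤ M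

/-- Finiteness of the weighted `C¹` norm. -/
def C1Fin (α : ℝ) (f : ℝ → ℝ → ℝ) : Prop :=
  BddDom f ∧ BddDom (fun R β => (1+R)/R * DR f R β) ∧
  BddDom (fun R β => (1 + (R * Real.sin (2*β) ^ α) ^ (-(1/40 : ℝ))) * Dbeta f R β)

/-- The weighted `W^{l,∞}` norm. -/
def Wnorm (α : ℝ) (l : ℕ) (f : ℝ → ℝ → ℝ) : ℝ :=
  (∑ k ∈ Finset.range (l+1), supDom (DR^[k] f))
  + ∑ p ∈ (Finset.range (l+1) ×ˢ Finset.range (l+1)).filter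
      (fun p => p.1 + p.2 ≤ l ∧ 1 ≤ p.2),
      supDom (fun R β => Real.sin (2*β) ^ (-(α/5)) *
        DR^[p.1] (fun R' β' => Dbeta^[p.2] f R' β' / (α/10 + Real.sin (2*β'))) R β)

/-- Finiteness of the `W^{l,∞}` norm. -/
def WFin (α : ℝ) (l : ℕ) (f : ℝ → ℝ → ℝ) : Prop :=
  (∀ k ≤ l, BddDom (DR^[k] f)) ∧
  ∀ k j : ℕ, k + j ≤ l → 1 ≤ j →
    BddDom (fun R β => Real.sin (2*β) ^ (-(α/5)) *
      DR^[k] (fun R' β' => Dbeta^[j] f R' β' / (α/10 + Real.sin (2*β'))) R β)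

/-- `I(f)(x,y) = ∫₀ˣ f(z,y)/z dz`. -/
def Ifun (f : ℝ → ℝ → ℝ) : ℝ → ℝ → ℝ := fun x y => ∫ z in Set.Ioo (0:ℝ) x, f z y / z

/-- `D_S g = (1/α)(z ∂_z g + y ∂_y g)` in Cartesian variables. -/
def DScart (α : ℝ) (g : ℝ → ℝ → ℝ) : ℝ → ℝ → ℝ := fun a b =>
  (1/α) * (a * deriv (fun a' => g a' b) a + b * deriv (fun b' => g a b') b)

/-- `D_τ g = 2y ∂_y g − 2α (y²/(y²+z²)) D_S g` in Cartesian variables. -/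
def DTcart (α : ℝ) (g : ℝ → ℝ → ℝ) : ℝ → ℝ → ℝ := fun a b =>
  2*b * deriv (fun b' => g a b') b - 2*α*(b^2/(b^2+a^2)) * DScart α g a b


/-- `g` is `C^n` and vanishes off `K`. -/
def Good (K : Set (ℝ × ℝ)) (n : ℕ) (g : ℝ → ℝ → ℝ) : Prop :=
  ContDiff ℝ n (Function.uncurry g) ∧ ∀ x y : ℝ, (x, y) ∉ K → g x y = 0

lemma Good.hasDerivAt_fst {K : Set (ℝ × ℝ)} {n : ℕ} {g : ℝ → ℝ → ℝ} (h : Good K (n+1) g)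
    (R β : ℝ) : HasDerivAt (fun r => g r β) (fderiv ℝ (Function.uncurry g) (R, β) (1, 0)) R := by
  have h1 : HasFDerivAt (Function.uncurry g) (fderiv ℝ (Function.uncurry g) (R, β)) (R, β) :=
    (h.1.differentiable (by simp) _).hasFDerivAt
  have h2 : HasDerivAt (fun r : ℝ => (r, β)) ((1:ℝ), (0:ℝ)) R :=
    (hasDerivAt_id R).prodMk (hasDerivAt_const R β)
  exact h1.comp_hasDerivAt R h2

lemma Good.hasDerivAt_snd {K : Set (ℝ × ℝ)} {n : ℕ} {g : ℝ → ℝ → ℝ} (h : Good K (n+1) g)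
    (R β : ℝ) : HasDerivAt (fun b => g R b) (fderiv ℝ (Function.uncurry g) (R, β) (0, 1)) β := by
  have h1 : HasFDerivAt (Function.uncurry g) (fderiv ℝ (Function.uncurry g) (R, β)) (R, β) :=
    (h.1.differentiable (by simp) _).hasFDerivAt
  have h2 : HasDerivAt (fun b : ℝ => (R, b)) ((0:ℝ), (1:ℝ)) β :=
    (hasDerivAt_const β R).prodMk (hasDerivAt_id β)
  exact h1.comp_hasDerivAt β h2

lemma Good.fderiv_zero {K : Set (ℝ × ℝ)} (hK : IsClosed K) {n : ℕ} {g : ℝ → ℝ → ℝ}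
    (h : Good K n g) (x y : ℝ) (hxy : (x, y) ∉ K) :
    fderiv ℝ (Function.uncurry g) (x, y) = 0 := by
  have : Function.uncurry g =ᶠ[nhds (x, y)] fun _ => (0:ℝ) := by
    filter_upwards [hK.isOpen_compl.mem_nhds hxy] with p hp
    exact h.2 p.1 p.2 hp
  rw [this.fderiv_eq]; simp

lemma Good.DR {K : Set (ℝ × ℝ)} (hK : IsClosed K) {n : ℕ} {g : ℝ → ℝ → ℝ}
    (h : Good K (n+1) g) : Good K n (DR g) := by
  have e : ∀ R β, Paper.DR g R β = R * fderiv ℝ (Function.uncurry g) (R, β) (1, 0) := by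
    intro R β
    simp only [Paper.DR, (h.hasDerivAt_fst R β).deriv]
  refine ⟨?_, ?_⟩
  · have : Function.uncurry (Paper.DR g)
        = fun p : ℝ × ℝ => p.1 * fderiv ℝ (Function.uncurry g) p (1, 0) := by
      funext p; exact e p.1 p.2
    rw [this]
    have h3 : ContDiff ℝ n (fun p => fderiv ℝ (Function.uncurry g) p) :=
      h.1.fderiv_right (by simp)
    exact contDiff_fst.mul (h3.clm_apply contDiff_const)
  · intro x y hxy
    rw [e, h.fderiv_zero hK x y hxy]; simp

lemma Good.Dbeta {K : Set (ℝ × ℝ)} (hK : IsClosed K) {n : ℕ} {g : ℝ → ℝ → ℝ}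
    (h : Good K (n+1) g) : Good K n (Dbeta g) := by
  have e : ∀ R β, Paper.Dbeta g R β
      = Real.sin (2*β) * fderiv ℝ (Function.uncurry g) (R, β) (0, 1) := by
    intro R β
    simp only [Paper.Dbeta, (h.hasDerivAt_snd R β).deriv]
  refine ⟨?_, ?_⟩
  · have : Function.uncurry (Paper.Dbeta g)
        = fun p : ℝ × ℝ => Real.sin (2*p.2) * fderiv ℝ (Function.uncurry g) p (0, 1) := by
      funext p; exact e p.1 p.2
    rw [this]
    have h3 : ContDiff ℝ n (fun p => fderiv ℝ (Function.uncurry g) p) :=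
      h.1.fderiv_right (by simp)
    exact (contDiff_const.mul contDiff_snd).sin.mul (h3.clm_apply contDiff_const)
  · intro x y hxy
    rw [e, h.fderiv_zero hK x y hxy]; simp

lemma Good.mono {K : Set (ℝ × ℝ)} {n k : ℕ} {g : ℝ → ℝ → ℝ} (h : Good K n g) (hk : k ≤ n) :
    Good K k g := ⟨h.1.of_le (by exact_mod_cast hk), h.2⟩

lemma Good.DR_iter {K : Set (ℝ × ℝ)} (hK : IsClosed K) (k : ℕ) : ∀ {n : ℕ} {g : ℝ → ℝ → ℝ},
    Good K (n+k) g → Good K n (Paper.DR^[k] g) := by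
  induction k with
  | zero => intro n g h; exact h
  | succ k ih =>
    intro n g h
    rw [Function.iterate_succ_apply]
    exact ih (Good.DR hK h)

lemma Good.Dbeta_iter {K : Set (ℝ × ℝ)} (hK : IsClosed K) (k : ℕ) : ∀ {n : ℕ} {g : ℝ → ℝ → ℝ},
    Good K (n+k) g → Good K n (Paper.Dbeta^[k] g) := by
  induction k with
  | zero => intro n g h; exact h
  | succ k ih =>
    intro n g h
    rw [Function.iterate_succ_apply]
    exact ih (Good.Dbeta hK h)

/-- Square-integrability on the domain. -/
lemma Good.integrable {K : Set (ℝ × ℝ)} (hK : IsCompact K) (hKQ : K ⊆ Qdom) {g : ℝ → ℝ → ℝ}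
    (h : Good K 0 g) {w : ℝ → ℝ → ℝ} (hw : ContinuousOn (Function.uncurry w) Qdom) :
    IntegrableOn (fun p : ℝ × ℝ => (g p.1 p.2 * Real.sqrt (w p.1 p.2))^2) Qdom := by
  have hc : Continuous (Function.uncurry g) := h.1.continuous
  have h1 : IntegrableOn (fun p : ℝ × ℝ => (g p.1 p.2 * Real.sqrt (w p.1 p.2))^2) K := by
    apply ContinuousOn.integrableOn_compact hK
    have h2 : ContinuousOn (fun p : ℝ × ℝ => g p.1 p.2) K := hc.continuousOn
    have h3 : ContinuousOn (fun p : ℝ × ℝ => w p.1 p.2) K := hw.mono hKQ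
    exact (h2.mul h3.sqrt).pow 2
  have h2 := (integrableOn_iff_integrable_of_support_subset (μ := volume)
    (f := fun p : ℝ × ℝ => (g p.1 p.2 * Real.sqrt (w p.1 p.2))^2) (s := K) (by
      intro p hp
      by_contra hpK
      apply hp
      have := h.2 p.1 p.2 hpK
      simp [this])).1 h1
  exact h2.integrableOn

lemma inner2_eq {g : ℝ → ℝ → ℝ} (hg : IntegrableOn (fun p : ℝ × ℝ => (g p.1 p.2)^2) Qdom) :
    inner2 g g = ∫ p in Qdom, (g p.1 p.2)^2 := by
  unfold Qdom at *
  rw [Measure.volume_eq_prod, setIntegral_prod _ (by rwa [Measure.volume_eq_prod] at hg)]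
  simp only [inner2, sq]

lemma norm2_sq (g : ℝ → ℝ → ℝ) : norm2 g ^ 2 = inner2 g g := by
  unfold norm2
  apply Real.sq_sqrt
  unfold inner2
  exact integral_nonneg fun R => integral_nonneg fun β => mul_self_nonneg _

lemma norm2_nonneg (g : ℝ → ℝ → ℝ) : 0 ≤ norm2 g := Real.sqrt_nonneg _

lemma norm2_le {ι : Type} (s : Finset ι) (g : ι → ℝ → ℝ → ℝ) (h : ℝ → ℝ → ℝ) (M B : ℝ)
    (hM : 0 ≤ M) (hB : 0 ≤ B) (hgB : ∀ i ∈ s, norm2 (g i) ≤ B)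
    (hg : ∀ i ∈ s, IntegrableOn (fun p : ℝ × ℝ => (g i p.1 p.2)^2) Qdom)
    (hh : ∀ R ∈ Set.Ioi (0:ℝ), ∀ β ∈ Set.Ioo (0:ℝ) (Real.pi/2),
      |h R β| ≤ M * ∑ i ∈ s, |g i R β|) :
    norm2 h ≤ M * s.card * B := by
  have hpt : ∀ R ∈ Set.Ioi (0:ℝ), ∀ β ∈ Set.Ioo (0:ℝ) (Real.pi/2),
      h R β * h R β ≤ ∑ i ∈ s, M^2 * s.card * (g i R β)^2 := by
    intro R hR β hβ
    have h1 := hh R hR β hβ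
    have h2 : h R β * h R β ≤ (M * ∑ i ∈ s, |g i R β|)^2 := by
      rw [← sq, ← sq_abs]
      exact pow_le_pow_left₀ (abs_nonneg _) h1 2
    have h3 : (∑ i ∈ s, |g i R β|)^2 ≤ s.card * ∑ i ∈ s, |g i R β|^2 :=
      sq_sum_le_card_mul_sum_sq
    rw [← Finset.mul_sum]
    simp only [sq_abs] at h3
    rw [mul_pow] at h2
    have := mul_le_mul_of_nonneg_left h3 (sq_nonneg M)
    linarith
  set T : ℝ × ℝ → ℝ := fun p => ∑ i ∈ s, M^2 * s.card * (g i p.1 p.2)^2 with hT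
  have hTi : IntegrableOn T Qdom := by
    apply integrable_finsetSum
    intro i hi
    exact (hg i hi).const_mul _
  have hTi' : Integrable T ((volume.restrict (Set.Ioi (0:ℝ))).prod
      (volume.restrict (Set.Ioo (0:ℝ) (Real.pi/2)))) := by
    rw [Measure.prod_restrict, ← Measure.volume_eq_prod]
    exact hTi
  have h1 : inner2 h h ≤ ∫ p in Qdom, T p := by
    have e : ∫ p in Qdom, T p
        = ∫ R in Set.Ioi (0:ℝ), ∫ β in Set.Ioo (0:ℝ) (Real.pi/2), T (R, β) := by
      unfold Qdom at *
      rw [Measure.volume_eq_prod, setIntegral_prod _ (by rwa [Measure.volume_eq_prod] at hTi)]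
    rw [e]
    unfold inner2
    apply integral_mono_of_nonneg
    · exact Filter.Eventually.of_forall fun R => integral_nonneg fun β => mul_self_nonneg _
    · exact hTi'.integral_prod_left
    · filter_upwards [hTi'.prod_right_ae, ae_restrict_mem measurableSet_Ioi] with R h1 hR
      apply integral_mono_of_nonneg
      · exact Filter.Eventually.of_forall fun β => mul_self_nonneg _
      · exact h1
      · filter_upwards [ae_restrict_mem measurableSet_Ioo] with β hβ
        exact hpt R hR β hβ
  have h2 : ∫ p in Qdom, T p = ∑ i ∈ s, M^2 * s.card * norm2 (g i)^2 := by
    rw [hT, integral_finsetSum _ (fun i hi => (hg i hi).const_mul _)]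
    apply Finset.sum_congr rfl
    intro i hi
    rw [integral_const_mul, norm2_sq, inner2_eq (hg i hi)]
  have h3 : ∑ i ∈ s, M^2 * s.card * norm2 (g i)^2 ≤ ∑ i ∈ s, M^2 * s.card * B^2 := by
    apply Finset.sum_le_sum
    intro i hi
    have := pow_le_pow_left₀ (norm2_nonneg _) (hgB i hi) 2
    gcongr
  rw [Finset.sum_const, nsmul_eq_mul] at h3
  unfold norm2
  apply Real.sqrt_le_iff.2
  refine ⟨by positivity, ?_⟩
  calc inner2 h h ≤ _ := h1
    _ = _ := h2
    _ ≤ _ := h3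
    _ = _ := by ring

/-! Weights -/

lemma trig_pos {β : ℝ} (hβ : β ∈ Set.Ioo (0:ℝ) (Real.pi/2)) :
    0 < Real.sin β ∧ 0 < Real.cos β := by
  have := Real.pi_pos
  exact ⟨Real.sin_pos_of_pos_of_lt_pi hβ.1 (by linarith [hβ.2]),
    Real.cos_pos_of_mem_Ioo ⟨by linarith [hβ.1], hβ.2⟩⟩

lemma radial_cont : ContinuousOn (fun p : ℝ × ℝ => (1+p.1)^4 / p.1^4) Qdom := by
  apply ContinuousOn.div
  · fun_prop
  · fun_prop
  · intro p hp
    exact pow_ne_zero _ (ne_of_gt hp.1)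

lemma sin2_pos {β : ℝ} (hβ : β ∈ Set.Ioo (0:ℝ) (Real.pi/2)) : 0 < Real.sin (2*β) := by
  rw [Real.sin_two_mul]
  have := trig_pos hβ
  have h1 := this.1
  have h2 := this.2
  positivity

lemma phi1_cont : ContinuousOn (Function.uncurry phi1) Qdom := by
  apply radial_cont.mul
  apply ContinuousOn.rpow_const
  · fun_prop
  · intro p hp; exact Or.inl (sin2_pos hp.2).ne'

lemma phi2_cont (α : ℝ) : ContinuousOn (Function.uncurry (phi2 α)) Qdom := by
  apply radial_cont.mul
  apply ContinuousOn.rpow_const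
  · fun_prop
  · intro p hp; exact Or.inl (sin2_pos hp.2).ne'

lemma psi1_cont : ContinuousOn (Function.uncurry psi1) Qdom := by
  apply radial_cont.mul
  apply ContinuousOn.rpow_const
  · fun_prop
  · intro p hp; exact Or.inl (mul_pos (trig_pos hp.2).1 (trig_pos hp.2).2).ne'

lemma psi2_cont (α : ℝ) : ContinuousOn (Function.uncurry (psi2 α)) Qdom := by
  apply ContinuousOn.mul
  · apply radial_cont.mul
    apply ContinuousOn.rpow_const
    · fun_prop
    · intro p hp; exact Or.inl (trig_pos hp.2).1.ne'
  · apply ContinuousOn.rpow_const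
    · fun_prop
    · intro p hp; exact Or.inl (trig_pos hp.2).2.ne'

lemma sqrt_le_two {a b : ℝ} (h : a ≤ 4 * b) : Real.sqrt a ≤ 2 * Real.sqrt b := by
  have : Real.sqrt (4 * b) = 2 * Real.sqrt b := by
    rw [Real.sqrt_mul (by norm_num)]
    congr 1
    rw [show (4:ℝ) = 2^2 by norm_num]; exact Real.sqrt_sq (by norm_num)
  rw [← this]; exact Real.sqrt_le_sqrt h

lemma sqrt_le_mul {a b c : ℝ} (hc : 0 ≤ c) (h : c^2 * a ≤ b) :
    c * Real.sqrt a ≤ Real.sqrt b := by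
  have : Real.sqrt (c^2 * a) = c * Real.sqrt a := by
    rw [Real.sqrt_mul (sq_nonneg c), Real.sqrt_sq hc]
  rw [← this]; exact Real.sqrt_le_sqrt h

lemma sin2_rpow {β : ℝ} (hβ : β ∈ Set.Ioo (0:ℝ) (Real.pi/2)) (e : ℝ) :
    Real.sin (2*β) ^ (-e) = 2 ^ (-e) * (Real.sin β ^ (-e) * Real.cos β ^ (-e)) := by
  have ⟨h1, h2⟩ := trig_pos hβ
  rw [Real.sin_two_mul, mul_assoc, Real.mul_rpow (by norm_num) (by positivity),
    Real.mul_rpow h1.le h2.le]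

lemma two_rpow {e : ℝ} (h0 : 0 ≤ e) (h2 : e ≤ 2) :
    (2:ℝ) ^ (-e) ≤ 1 ∧ 1 ≤ 4 * (2:ℝ)^(-e) := by
  constructor
  · exact Real.rpow_le_one_of_one_le_of_nonpos (by norm_num) (by linarith)
  · have : (2:ℝ)^(-(2:ℝ)) ≤ 2^(-e) :=
      Real.rpow_le_rpow_of_exponent_le (by norm_num) (by linarith)
    have h : (2:ℝ)^(-(2:ℝ)) = 1/4 := by
      rw [Real.rpow_neg (by norm_num)]; norm_num
    rw [h] at this; linarith

lemma psi1_le {R β : ℝ} (hR : R ∈ Set.Ioi (0:ℝ)) (hβ : β ∈ Set.Ioo (0:ℝ) (Real.pi/2)) :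
    psi1 R β ≤ 4 * phi1 R β ∧ phi1 R β ≤ psi1 R β := by
  have ⟨h1, h2⟩ := trig_pos hβ
  have hR : 0 < R := hR
  have ⟨t1, t2⟩ := two_rpow (e := 99/100) (by norm_num) (by norm_num)
  unfold psi1 phi1
  rw [sin2_rpow hβ, Real.mul_rpow h1.le h2.le]
  have hX : 0 ≤ (1+R)^4 / R^4 * (Real.sin β ^ (-(99/100:ℝ)) * Real.cos β ^ (-(99/100:ℝ))) := by
    positivity
  constructor
  · nlinarith [mul_le_mul_of_nonneg_right t2 hX]
  · nlinarith [mul_le_mul_of_nonneg_right t1 hX]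

lemma psi2_le {α R β : ℝ} (ha : 0 < α) (ha' : α ≤ 1/1000)
    (hR : R ∈ Set.Ioi (0:ℝ)) (hβ : β ∈ Set.Ioo (0:ℝ) (Real.pi/2)) :
    psi2 α R β ≤ 4 * phi2 α R β := by
  have ⟨h1, h2⟩ := trig_pos hβ
  have hR : 0 < R := hR
  have ⟨t1, t2⟩ := two_rpow (e := 1 + α/10) (by linarith) (by linarith)
  unfold psi2 phi2
  rw [sin2_rpow hβ]
  have hs : Real.sin β ^ (-(99/100:ℝ)) ≤ Real.sin β ^ (-(1+α/10)) :=
    Real.rpow_le_rpow_of_exponent_ge h1 (Real.sin_le_one β) (by linarith)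
  have hX : 0 ≤ (1+R)^4 / R^4 * (Real.sin β ^ (-(1+α/10)) * Real.cos β ^ (-(1+α/10))) := by
    positivity
  calc _ ≤ (1+R)^4 / R^4 * Real.sin β ^ (-(1+α/10)) * Real.cos β ^ (-(1+α/10)) := by gcongr
    _ ≤ _ := by nlinarith [mul_le_mul_of_nonneg_right t2 hX]

lemma phi2_le {α lam R β : ℝ} (ha : 0 < α) (ha' : α ≤ 1/1000)
    (hl : ((1 + α/10) - 99/100)/2 ≤ lam)
    (hR : R ∈ Set.Ioi (0:ℝ)) (hβ : β ∈ Set.Ioo (0:ℝ) (Real.pi/2)) :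
    (Real.sin β ^ lam)^2 * phi2 α R β ≤ psi2 α R β := by
  have ⟨h1, h2⟩ := trig_pos hβ
  have hR : 0 < R := hR
  have ⟨t1, t2⟩ := two_rpow (e := 1 + α/10) (by linarith) (by linarith)
  unfold psi2 phi2
  rw [sin2_rpow hβ]
  have hs : (Real.sin β ^ lam)^2 * Real.sin β ^ (-(1+α/10)) ≤ Real.sin β ^ (-(99/100:ℝ)) := by
    rw [sq, ← Real.rpow_add h1, ← Real.rpow_add h1]
    exact Real.rpow_le_rpow_of_exponent_ge h1 (Real.sin_le_one β) (by linarith)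
  calc _ = 2 ^ (-(1+α/10)) * ((1+R)^4 / R^4 *
        ((Real.sin β ^ lam)^2 * Real.sin β ^ (-(1+α/10))) * Real.cos β ^ (-(1+α/10))) := by ring
    _ ≤ 1 * ((1+R)^4 / R^4 *
        Real.sin β ^ (-(99/100:ℝ)) * Real.cos β ^ (-(1+α/10))) := by gcongr
    _ = _ := by ring

lemma cos_psi2_le {α R β : ℝ} (ha' : α ≤ 1/1000)
    (hR : R ∈ Set.Ioi (0:ℝ)) (hβ : β ∈ Set.Ioo (0:ℝ) (Real.pi/2)) :
    (Real.cos β ^ 2)^2 * psi2 α R β ≤ psi1 R β := by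
  have ⟨h1, h2⟩ := trig_pos hβ
  have hR : 0 < R := hR
  unfold psi2 psi1
  rw [Real.mul_rpow h1.le h2.le]
  have hs : (Real.cos β ^ 2)^2 * Real.cos β ^ (-(1+α/10)) ≤ Real.cos β ^ (-(99/100:ℝ)) := by
    rw [← pow_mul, ← Real.rpow_natCast, ← Real.rpow_add h2]
    exact Real.rpow_le_rpow_of_exponent_ge h2 (Real.cos_le_one β) (by norm_num; linarith)
  calc _ = (1+R)^4 / R^4 * (Real.sin β ^ (-(99/100:ℝ)) *
        ((Real.cos β ^ 2)^2 * Real.cos β ^ (-(1+α/10)))) := by ring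
    _ ≤ _ := by gcongr

/-! Conjugation -/

lemma Dbeta_conj {lam : ℝ} {u v : ℝ → ℝ → ℝ} {R β v' : ℝ}
    (hβ : β ∈ Set.Ioo (0:ℝ) (Real.pi/2))
    (huv : ∀ b ∈ Set.Ioo (0:ℝ) (Real.pi/2), u R b = Real.sin b ^ lam * v R b)
    (hv : HasDerivAt (fun b => v R b) v' β) :
    Dbeta u R β = Real.sin β ^ lam
      * (Real.sin (2*β) * v' + 2*lam*Real.cos β^2 * v R β) := by
  have ⟨h1, h2⟩ := trig_pos hβ
  have e : (fun b => u R b) =ᶠ[nhds β] fun b => Real.sin b ^ lam * v R b := by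
    filter_upwards [isOpen_Ioo.mem_nhds hβ] with b hb using huv b hb
  have hd := ((Real.hasDerivAt_sin β).rpow_const (p := lam) (Or.inl h1.ne')).mul hv
  have hd' := hd.congr_of_eventuallyEq e
  unfold Dbeta
  rw [hd'.deriv, Real.sin_two_mul, Real.rpow_sub_one h1.ne']
  field_simp
  ring

lemma DR_iter_sum {K : Set (ℝ × ℝ)} (hK : IsClosed K) {β : ℝ} (s : Finset ℕ) (q : ℕ → ℝ)
    (F : ℕ → ℝ → ℝ → ℝ) (i : ℕ) : ∀ (_ : ∀ l ∈ s, Good K i (F l)) (u : ℝ → ℝ → ℝ)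
    (_ : ∀ R, u R β = ∑ l ∈ s, q l * F l R β) (R : ℝ),
    DR^[i] u R β = ∑ l ∈ s, q l * DR^[i] (F l) R β := by
  induction i with
  | zero => intro hF u hu R; exact hu R
  | succ i ih =>
    intro hF u hu R
    have ih' := ih (fun l hl => (hF l hl).mono (Nat.le_succ i)) u hu
    simp only [Function.iterate_succ_apply']
    have hd : HasDerivAt (fun r => DR^[i] u r β)
        (∑ l ∈ s, q l * deriv (fun r => DR^[i] (F l) r β) R) R := by
      have : (fun r => DR^[i] u r β) = fun r => ∑ l ∈ s, q l * DR^[i] (F l) r β :=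
        funext ih'
      rw [this]
      apply HasDerivAt.fun_sum
      intro l hl
      have hG : Good K 1 (DR^[i] (F l)) :=
        Good.DR_iter hK i ((hF l hl).mono (by omega))
      have := Good.hasDerivAt_fst (n := 0) hG R β
      exact this.differentiableAt.hasDerivAt.const_mul _
    change R * deriv (fun r => DR^[i] u r β) R
      = ∑ l ∈ s, q l * (R * deriv (fun r => DR^[i] (F l) r β) R)
    rw [hd.deriv, Finset.mul_sum]
    apply Finset.sum_congr rfl
    intro l _
    ring

lemma cos_sq_deriv (β : ℝ) :
    HasDerivAt (fun b => Real.cos b ^ 2) (-(2 * Real.cos β * Real.sin β)) β := by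
  have := (Real.hasDerivAt_cos β).pow 2
  exact this.congr_deriv (by push_cast; ring)

lemma p0_bound2 {mu c : ℝ} (hm0 : 0 ≤ mu) (hm1 : mu ≤ 1) (c0 : 0 ≤ c) (c1 : c ≤ 1) :
    |(-4 * mu * c + (4*mu+mu^2) * c^2)| ≤ 10 * c := by
  have e : -4 * mu * c + (4*mu+mu^2) * c^2 = c * (-4 * mu + (4*mu+mu^2) * c) := by ring
  rw [e, abs_mul, abs_of_nonneg c0, mul_comm]
  gcongr
  have h1 : 0 ≤ mu^2 := sq_nonneg _
  have h2 : mu^2 ≤ 1 := by nlinarith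
  have h3 : 0 ≤ (4*mu+mu^2) * c := by positivity
  have h4 : (4*mu+mu^2) * c ≤ 5 := by nlinarith
  rw [abs_le]; constructor <;> linarith

lemma dc_bound {c : ℝ} (c0 : 0 ≤ c) (c1 : c ≤ 1) : |(-4 * c + 4 * c^2)| ≤ 4 * c := by
  rw [abs_le]; constructor <;> nlinarith

lemma p1_bound3 {mu c : ℝ} (hm0 : 0 ≤ mu) (hm1 : mu ≤ 1) (c0 : 0 ≤ c) (c1 : c ≤ 1) :
    |(2 * mu * (-4 * c + 4 * c^2) + (-4 * mu * c + (4*mu+mu^2) * c^2)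
      + 2 * mu^2 * c^2)| ≤ 100 := by
  have h1 := p0_bound2 hm0 hm1 c0 c1
  have h2 : |2 * mu * (-4 * c + 4 * c^2)| ≤ 2 * 1 * (4 * c) := by
    rw [abs_mul, abs_of_nonneg (by positivity : 0 ≤ 2 * mu)]
    have := dc_bound c0 c1
    gcongr
  have h3 : |2 * mu^2 * c^2| ≤ 2 * 1^2 * 1^2 := by
    rw [abs_of_nonneg (by positivity)]
    gcongr
  refine (abs_add_three _ _ _).trans ?_
  linarith

lemma p0_bound3 {mu c : ℝ} (hm0 : 0 ≤ mu) (hm1 : mu ≤ 1) (c0 : 0 ≤ c) (c1 : c ≤ 1) :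
    |((-4*mu + 2*(4*mu+mu^2) * c) * (-4 * c + 4 * c^2)
      + mu * c * (-4 * mu * c + (4*mu+mu^2) * c^2))| ≤ 100 * c := by
  have h1 := p0_bound2 hm0 hm1 c0 c1
  have h2 : |(-4*mu + 2*(4*mu+mu^2) * c)| ≤ 10 := by
    have h2 : mu^2 ≤ 1 := by nlinarith
    have h3 : 0 ≤ (4*mu+mu^2) * c := by positivity
    have h4 : (4*mu+mu^2) * c ≤ 4 * mu + mu^2 := by nlinarith
    rw [abs_le]; constructor <;> nlinarith
  refine (abs_add_le _ _).trans ?_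
  rw [abs_mul, abs_mul (mu * c), abs_of_nonneg (by positivity : 0 ≤ mu * c)]
  have h3 := mul_le_mul h2 (dc_bound c0 c1) (abs_nonneg _) (by norm_num)
  have h4 : mu * c ≤ 1 := by nlinarith
  have h5 := mul_le_mul h4 h1 (abs_nonneg _) (by norm_num)
  linarith

lemma Dbeta_iter_conj {K : Set (ℝ × ℝ)} (hK : IsClosed K) {lam : ℝ} (hl0 : 0 ≤ lam)
    (hl : lam ≤ 1/2) (f : ℝ → ℝ → ℝ) (n : ℕ) (hn : n + 1 ≤ 3) (hf : Good K (n+1) f) :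
    ∃ p : ℕ → ℝ → ℝ, (∀ l, ∀ β, |p l β| ≤ 100) ∧ (∀ β, |p 0 β| ≤ 100 * Real.cos β ^ 2) ∧
      ∀ R, ∀ β ∈ Set.Ioo (0:ℝ) (Real.pi/2),
        Dbeta^[n+1] (fun R β => Real.sin β ^ lam * f R β) R β
          = ∑ l ∈ Finset.range (n+2), (Real.sin β ^ lam * p l β) * Dbeta^[l] f R β := by
  have hc : ∀ β, 0 ≤ Real.cos β ^ 2 ∧ Real.cos β ^ 2 ≤ 1 := fun β =>
    ⟨sq_nonneg _, Real.cos_sq_le_one β⟩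
  have hd : ∀ g : ℝ → ℝ → ℝ, Good K 1 g → ∀ R β, HasDerivAt (fun b => g R b)
      (deriv (fun b => g R b) β) β := fun g hg R β =>
    (Good.hasDerivAt_snd (n := 0) hg R β).differentiableAt.hasDerivAt
  have hs : ∀ β, Real.sin (2*β) * (-(2 * Real.cos β * Real.sin β))
      = -4 * Real.cos β^2 + 4 * (Real.cos β^2)^2 := by
    intro β
    rw [Real.sin_two_mul]
    have := Real.sin_sq β
    linear_combination (-4 * Real.cos β^2) * this
  obtain ⟨mu, hmu⟩ : ∃ mu, mu = 2 * lam := ⟨_, rfl⟩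
  have hm0 : 0 ≤ mu := by linarith
  have hm1 : mu ≤ 1 := by linarith
  have step1 : ∀ R, ∀ β ∈ Set.Ioo (0:ℝ) (Real.pi/2),
      Dbeta (fun R β => Real.sin β ^ lam * f R β) R β
        = Real.sin β ^ lam * (Dbeta f R β + mu * Real.cos β^2 * f R β) := by
    intro R β hβ
    rw [Dbeta_conj (v := f) hβ (fun b _ => rfl) (hd f (hf.mono (by omega)) R β), hmu]
    rfl
  have step2 : 1 ≤ n → ∀ R, ∀ β ∈ Set.Ioo (0:ℝ) (Real.pi/2),
      Dbeta (Dbeta (fun R β => Real.sin β ^ lam * f R β)) R β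
        = Real.sin β ^ lam * (Dbeta (Dbeta f) R β + 2 * mu * Real.cos β^2 * Dbeta f R β
          + (-4 * mu * Real.cos β^2 + (4*mu+mu^2) * (Real.cos β^2)^2) * f R β) := by
    intro hn1 R β hβ
    have g1 : Good K 1 (Dbeta f) := Good.Dbeta hK (hf.mono (by omega))
    have d0 := hd f (hf.mono (by omega)) R β
    have d1 := hd _ g1 R β
    have dv := d1.add (((cos_sq_deriv β).const_mul mu).mul d0)
    rw [Dbeta_conj (v := fun R b => Dbeta f R b + mu * Real.cos b^2 * f R b) hβ
      (step1 R) dv, ← hmu]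
    simp only [Dbeta]
    linear_combination (Real.sin β ^ lam * mu * f R β) * hs β
  have step3 : 2 ≤ n → ∀ R, ∀ β ∈ Set.Ioo (0:ℝ) (Real.pi/2),
      Dbeta (Dbeta (Dbeta (fun R β => Real.sin β ^ lam * f R β))) R β
        = Real.sin β ^ lam * (Dbeta (Dbeta (Dbeta f)) R β
          + 3 * mu * Real.cos β^2 * Dbeta (Dbeta f) R β
          + (2 * mu * (-4 * Real.cos β^2 + 4 * (Real.cos β^2)^2)
            + (-4 * mu * Real.cos β^2 + (4*mu+mu^2) * (Real.cos β^2)^2)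
            + 2 * mu^2 * (Real.cos β^2)^2) * Dbeta f R β
          + ((-4*mu + 2*(4*mu+mu^2) * Real.cos β^2) * (-4 * Real.cos β^2 + 4 * (Real.cos β^2)^2)
            + mu * Real.cos β^2 * (-4 * mu * Real.cos β^2 + (4*mu+mu^2) * (Real.cos β^2)^2))
            * f R β) := by
    intro hn1 R β hβ
    have g1 : Good K 1 (Dbeta f) := Good.Dbeta hK (hf.mono (by omega))
    have g2 : Good K 1 (Dbeta (Dbeta f)) :=
      Good.Dbeta hK (Good.Dbeta hK (hf.mono (by omega)))
    have d0 := hd f (hf.mono (by omega)) R β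
    have d1 := hd _ g1 R β
    have d2 := hd _ g2 R β
    have c1 := cos_sq_deriv β
    have dv := (d2.add ((c1.const_mul (2*mu)).mul d1)).add
      (((c1.const_mul (-4*mu)).add ((c1.pow 2).const_mul (4*mu+mu^2))).mul d0)
    rw [Dbeta_conj (v := fun R b => Dbeta (Dbeta f) R b + 2 * mu * Real.cos b^2 * Dbeta f R b
          + (-4 * mu * Real.cos b^2 + (4*mu+mu^2) * (Real.cos b^2)^2) * f R b) hβ
      (step2 (by omega) R) dv, ← hmu]
    simp only [Dbeta, Pi.add_apply, Pi.mul_apply, Pi.pow_apply]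
    push_cast
    linear_combination (Real.sin β ^ lam * (2 * mu * (Real.sin (2*β) * deriv (fun b => f R b) β)
      + (-4*mu + 2*(4*mu+mu^2) * Real.cos β^2) * f R β)) * hs β
  obtain rfl | rfl | rfl : n = 0 ∨ n = 1 ∨ n = 2 := by omega
  · refine ⟨fun l β => if l = 0 then mu * Real.cos β^2 else 1, ?_, ?_, ?_⟩
    · intro l β
      have ⟨c0, c1⟩ := hc β
      dsimp only
      generalize Real.cos β^2 = c at c0 c1 ⊢
      split_ifs
      · rw [abs_le]; constructor <;> nlinarith [mul_nonneg hm0 c0]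
      · norm_num
    · intro β
      have ⟨c0, c1⟩ := hc β
      simp only [if_true]
      generalize Real.cos β^2 = c at c0 c1 ⊢
      rw [abs_le]; constructor <;> nlinarith [mul_nonneg hm0 c0]
    · intro R β hβ
      simp only [Finset.sum_range_succ, Finset.sum_range_zero, Function.iterate_succ,
        Function.iterate_zero, Function.comp, id]
      rw [step1 R β hβ]
      norm_num
      ring
  · refine ⟨fun l β => if l = 0 then
        (-4 * mu * Real.cos β^2 + (4*mu+mu^2) * (Real.cos β^2)^2)
      else if l = 1 then 2 * mu * Real.cos β^2 else 1, ?_, ?_, ?_⟩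
    · intro l β
      have ⟨c0, c1⟩ := hc β
      dsimp only
      generalize Real.cos β^2 = c at c0 c1 ⊢
      split_ifs
      · exact p0_bound2 hm0 hm1 c0 c1 |>.trans (by linarith)
      · rw [abs_le]; constructor <;> nlinarith [mul_nonneg hm0 c0]
      · norm_num
    · intro β
      have ⟨c0, c1⟩ := hc β
      simp only [if_true]
      generalize Real.cos β^2 = c at c0 c1 ⊢
      exact p0_bound2 hm0 hm1 c0 c1 |>.trans (by linarith)
    · intro R β hβ
      simp only [Finset.sum_range_succ, Finset.sum_range_zero, Function.iterate_succ,
        Function.iterate_zero, Function.comp, id]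
      rw [step2 le_rfl R β hβ]
      norm_num
      ring
  · refine ⟨fun l β => if l = 0 then
        ((-4*mu + 2*(4*mu+mu^2) * Real.cos β^2) * (-4 * Real.cos β^2 + 4 * (Real.cos β^2)^2)
            + mu * Real.cos β^2 * (-4 * mu * Real.cos β^2 + (4*mu+mu^2) * (Real.cos β^2)^2))
      else if l = 1 then (2 * mu * (-4 * Real.cos β^2 + 4 * (Real.cos β^2)^2)
            + (-4 * mu * Real.cos β^2 + (4*mu+mu^2) * (Real.cos β^2)^2)
            + 2 * mu^2 * (Real.cos β^2)^2)
      else if l = 2 then 3 * mu * Real.cos β^2 else 1, ?_, ?_, ?_⟩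
    · intro l β
      have ⟨c0, c1⟩ := hc β
      dsimp only
      generalize Real.cos β^2 = c at c0 c1 ⊢
      split_ifs
      · exact p0_bound3 hm0 hm1 c0 c1 |>.trans (by linarith)
      · exact p1_bound3 hm0 hm1 c0 c1
      · rw [abs_le]; constructor <;> nlinarith [mul_nonneg hm0 c0]
      · norm_num
    · intro β
      have ⟨c0, c1⟩ := hc β
      simp only [if_true]
      generalize Real.cos β^2 = c at c0 c1 ⊢
      exact p0_bound3 hm0 hm1 c0 c1
    · intro R β hβ
      simp only [Finset.sum_range_succ, Finset.sum_range_zero, Function.iterate_succ,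
        Function.iterate_zero, Function.comp, id]
      rw [step3 le_rfl R β hβ]
      norm_num
      ring

lemma Hnorm_nonneg (m : ℕ) (w1 w2 f : ℝ → ℝ → ℝ) : 0 ≤ Hnorm m w1 w2 f :=
  add_nonneg (Finset.sum_nonneg fun _ _ => norm2_nonneg _)
    (Finset.sum_nonneg fun _ _ => norm2_nonneg _)

lemma Hnorm_le {m : ℕ} (hm : m ≤ 3) (w1 w2 f : ℝ → ℝ → ℝ) (B : ℝ) (hB : 0 ≤ B)
    (h1 : ∀ k ≤ m, norm2 (fun R β => DR^[k] f R β * Real.sqrt (w1 R β)) ≤ B)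
    (h2 : ∀ i j, i + j + 1 ≤ m →
      norm2 (fun R β => DR^[i] (Dbeta^[j+1] f) R β * Real.sqrt (w2 R β)) ≤ B) :
    Hnorm m w1 w2 f ≤ 20 * B := by
  have hm' : (m:ℝ) ≤ 3 := by exact_mod_cast hm
  have hm0 : (0:ℝ) ≤ m := Nat.cast_nonneg m
  unfold Hnorm
  have a1 : ∑ k ∈ Finset.range (m+1),
      norm2 (fun R β => DR^[k] f R β * Real.sqrt (w1 R β)) ≤ 4 * B := by
    refine (Finset.sum_le_card_nsmul _ _ B fun k hk => h1 k ?_).trans ?_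
    · have := Finset.mem_range.1 hk; omega
    · rw [Finset.card_range, nsmul_eq_mul]; push_cast; gcongr; linarith
  have a2 : ∑ p ∈ (Finset.range (m+1) ×ˢ Finset.range (m+1)).filter
      (fun p => p.1 + p.2 + 1 ≤ m),
      norm2 (fun R β => DR^[p.1] (Dbeta^[p.2+1] f) R β * Real.sqrt (w2 R β)) ≤ 16 * B := by
    refine (Finset.sum_le_card_nsmul _ _ B fun p hp => h2 p.1 p.2 ?_).trans ?_
    · exact (Finset.mem_filter.1 hp).2
    · rw [nsmul_eq_mul]
      have := Finset.card_filter_le (Finset.range (m+1) ×ˢ Finset.range (m+1))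
        (fun p => p.1 + p.2 + 1 ≤ m)
      rw [Finset.card_product, Finset.card_range] at this
      have h16 : (m+1)*(m+1) ≤ 16 := by nlinarith
      have h3 := this.trans h16
      gcongr
      exact_mod_cast h3
  linarith

lemma le_Hnorm1 {m k : ℕ} (hk : k ≤ m) (w1 w2 f : ℝ → ℝ → ℝ) :
    norm2 (fun R β => DR^[k] f R β * Real.sqrt (w1 R β)) ≤ Hnorm m w1 w2 f := by
  unfold Hnorm
  have := Finset.single_le_sum
    (f := fun k => norm2 (fun R β => DR^[k] f R β * Real.sqrt (w1 R β)))
    (fun i _ => norm2_nonneg _) (Finset.mem_range.2 (Nat.lt_succ_of_le hk))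
  refine this.trans (le_add_of_nonneg_right (Finset.sum_nonneg fun _ _ => norm2_nonneg _))

lemma le_Hnorm2 {m i j : ℕ} (hk : i + j + 1 ≤ m) (w1 w2 f : ℝ → ℝ → ℝ) :
    norm2 (fun R β => DR^[i] (Dbeta^[j+1] f) R β * Real.sqrt (w2 R β)) ≤ Hnorm m w1 w2 f := by
  unfold Hnorm
  have hmem : (i, j) ∈ (Finset.range (m+1) ×ˢ Finset.range (m+1)).filter
      (fun p => p.1 + p.2 + 1 ≤ m) := by
    simp only [Finset.mem_filter, Finset.mem_product, Finset.mem_range]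
    omega
  have := Finset.single_le_sum
    (f := fun p : ℕ × ℕ =>
      norm2 (fun R β => DR^[p.1] (Dbeta^[p.2+1] f) R β * Real.sqrt (w2 R β)))
    (fun i _ => norm2_nonneg _) hmem
  refine this.trans (le_add_of_nonneg_left (Finset.sum_nonneg fun _ _ => norm2_nonneg _))

/-- Single-term comparison. -/
lemma norm2_le_one (g h : ℝ → ℝ → ℝ) (B : ℝ) (hB : norm2 g ≤ B)
    (hg : IntegrableOn (fun p : ℝ × ℝ => (g p.1 p.2)^2) Qdom)
    (hh : ∀ R ∈ Set.Ioi (0:ℝ), ∀ β ∈ Set.Ioo (0:ℝ) (Real.pi/2), |h R β| ≤ 2 * |g R β|) :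
    norm2 h ≤ 400 * B := by
  have hB0 := (norm2_nonneg g).trans hB
  have := norm2_le (Finset.univ : Finset Unit) (fun _ => g) h 2 B (by norm_num) hB0
    (fun _ _ => hB) (fun _ _ => hg) (by simpa using hh)
  simp at this
  linarith

/-- comparison between the `H^m(ψ)` and `H^m` norms. -/
theorem Hm_psi_phi_comparison :
    ∃ C : ℝ, ∀ α : ℝ, 0 < α → α ≤ 1/1000 →
      ∀ m : ℕ, m ≤ 3 →
      ∀ lam : ℝ, ((1 + α/10) - 99/100)/2 ≤ lam → lam ≤ 1/2 →
      ∀ f : ℝ → ℝ → ℝ, ContDiff ℝ m (Function.uncurry f) → suppIn f →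
        Hnorm m psi1 (psi2 α) f ≤ C * Hnorm m phi1 (phi2 α) f ∧
        Hnorm m phi1 (phi2 α) (fun R β => Real.sin β ^ lam * f R β)
          ≤ C * Hnorm m psi1 (psi2 α) f := by
  refine ⟨20 * 400, ?_⟩
  intro α ha ha' m hm lam hl1 hl2 f hf ⟨K, hK, hKQ, hfK⟩
  have hKc := hK.isClosed
  have hG : Good K m f := ⟨hf, hfK⟩
  have hl0 : 0 ≤ lam := by linarith
  have G1 : ∀ k ≤ m, Good K 0 (DR^[k] f) := fun k hk =>
    Good.DR_iter hKc k (hG.mono (by omega))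
  have G2 : ∀ i j, i + j ≤ m → Good K i (Dbeta^[j] f) := fun i j h =>
    Good.Dbeta_iter hKc j (hG.mono h)
  have G3 : ∀ i j, i + j ≤ m → Good K 0 (DR^[i] (Dbeta^[j] f)) := fun i j h =>
    Good.DR_iter hKc i ((G2 i j h).mono (by omega))
  constructor
  · rw [mul_assoc]
    have hB := Hnorm_nonneg m phi1 (phi2 α) f
    apply Hnorm_le hm _ _ _ _ (by positivity)
    · intro k hk
      apply norm2_le_one _ _ _ (le_Hnorm1 hk phi1 (phi2 α) f) ((G1 k hk).integrable hK hKQ phi1_cont)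
      intro R hR β hβ
      rw [abs_mul, abs_mul, abs_of_nonneg (Real.sqrt_nonneg _), abs_of_nonneg (Real.sqrt_nonneg _)]
      have := mul_le_mul_of_nonneg_left (sqrt_le_two (psi1_le hR hβ).1) (abs_nonneg (DR^[k] f R β))
      linarith
    · intro i j hij
      apply norm2_le_one _ _ _ (le_Hnorm2 hij phi1 (phi2 α) f)
        ((G3 i (j+1) (by omega)).integrable hK hKQ (phi2_cont α))
      intro R hR β hβ
      rw [abs_mul, abs_mul, abs_of_nonneg (Real.sqrt_nonneg _), abs_of_nonneg (Real.sqrt_nonneg _)]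
      have := mul_le_mul_of_nonneg_left (sqrt_le_two (psi2_le ha ha' hR hβ))
        (abs_nonneg (DR^[i] (Dbeta^[j+1] f) R β))
      linarith
  · rw [mul_assoc]
    have hB := Hnorm_nonneg m psi1 (psi2 α) f
    apply Hnorm_le hm _ _ _ _ (by positivity)
    · intro k hk
      apply norm2_le_one _ _ _ (le_Hnorm1 hk psi1 (psi2 α) f) ((G1 k hk).integrable hK hKQ psi1_cont)
      intro R hR β hβ
      have ⟨s0, _⟩ := trig_pos hβ
      have e := DR_iter_sum hKc (β := β) {0} (fun _ => Real.sin β ^ lam) (fun _ => f) k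
        (fun _ _ => hG.mono hk) (fun R β => Real.sin β ^ lam * f R β) (by simp) R
      rw [Finset.sum_singleton] at e
      rw [e]
      have t0 : 0 ≤ Real.sin β ^ lam := Real.rpow_nonneg s0.le _
      have t1 : Real.sin β ^ lam ≤ 1 := Real.rpow_le_one s0.le (Real.sin_le_one β) hl0
      rw [abs_mul, abs_mul, abs_mul, abs_of_nonneg (Real.sqrt_nonneg _),
        abs_of_nonneg (Real.sqrt_nonneg _), abs_of_nonneg t0]
      have h1 := Real.sqrt_le_sqrt (psi1_le hR hβ).2
      calc Real.sin β ^ lam * |DR^[k] f R β| * Real.sqrt (phi1 R β)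
          ≤ 1 * |DR^[k] f R β| * Real.sqrt (psi1 R β) := by gcongr
        _ ≤ _ := by
          have : 0 ≤ |DR^[k] f R β| * Real.sqrt (psi1 R β) := by positivity
          linarith
    · intro i j hij
      obtain ⟨p, hp, hp0, hform⟩ := Dbeta_iter_conj hKc hl0 hl2 f j (by omega) (hG.mono (by omega))
      have key := norm2_le (Finset.range (j+2))
        (fun l R β => DR^[i] (Dbeta^[l] f) R β
          * Real.sqrt ((if l = 0 then psi1 else psi2 α) R β))
        (fun R β => DR^[i] (Dbeta^[j+1] (fun R β => Real.sin β ^ lam * f R β)) R β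
          * Real.sqrt (phi2 α R β)) 100 (Hnorm m psi1 (psi2 α) f) (by norm_num) hB ?_ ?_ ?_
      · refine key.trans ?_
        rw [Finset.card_range]
        have : ((j + 2 : ℕ) : ℝ) ≤ 4 := by
          have : j + 2 ≤ 4 := by omega
          exact_mod_cast this
        gcongr
        linarith
      · intro l hl
        have hl' := Finset.mem_range.1 hl
        rcases l with _ | l
        · simpa using le_Hnorm1 (show i ≤ m by omega) psi1 (psi2 α) f
        · simpa using le_Hnorm2 (show i + l + 1 ≤ m by omega) psi1 (psi2 α) f
      · intro l hl
        have hl' := Finset.mem_range.1 hl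
        apply (G3 i l (by omega)).integrable hK hKQ
        split_ifs
        · exact psi1_cont
        · exact psi2_cont α
      · intro R hR β hβ
        have ⟨s0, _⟩ := trig_pos hβ
        have t0 : 0 ≤ Real.sin β ^ lam := Real.rpow_nonneg s0.le _
        have e := DR_iter_sum hKc (β := β) (Finset.range (j+2))
          (fun l => Real.sin β ^ lam * p l β) (fun l => Dbeta^[l] f) i
          (fun l hl => G2 i l (by have := Finset.mem_range.1 hl; omega)) _
          (fun R => hform R β hβ) R
        rw [e, Finset.sum_mul, Finset.mul_sum]
        refine (Finset.abs_sum_le_sum_abs _ _).trans (Finset.sum_le_sum fun l hl => ?_)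
        have w1 := sqrt_le_mul t0 (phi2_le ha ha' hl1 hR hβ)
        have w2 := sqrt_le_mul (sq_nonneg (Real.cos β)) (cos_psi2_le (α := α) ha' hR hβ)
        have hw : |p l β| * (Real.sin β ^ lam * Real.sqrt (phi2 α R β))
            ≤ 100 * Real.sqrt ((if l = 0 then psi1 else psi2 α) R β) := by
          split_ifs with h0
          · subst h0
            calc _ ≤ (100 * Real.cos β ^ 2) * Real.sqrt (psi2 α R β) := by
                  gcongr; exact hp0 β
              _ ≤ _ := by linarith
          · gcongr
            exact hp l β
        rw [abs_mul, abs_mul, abs_mul, abs_mul, abs_of_nonneg (Real.sqrt_nonneg _),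
          abs_of_nonneg (Real.sqrt_nonneg _), abs_of_nonneg t0]
        have := mul_le_mul_of_nonneg_left hw (abs_nonneg (DR^[i] (Dbeta^[l] f) R β))
        linarith

end Paper
end
end

section
/- For every α ∈ (0, 1/10] there is a constant C_α such that the following holds. Let f : (0,∞)×[0,π/2] → ℝ be continuously differentiable with f(R, π/2) = 0 for all R > 0 and ‖f‖_{C¹} < ∞, and define F on the open first quadrant of ℝ² by F(x,y) = f((x²+y²)^{α/2}, arctan(y/x)). Then for all points P₁, P₂ in the open first quadrant: |F(P₁) − F(P₂)| ≤ C_α ‖f‖_{C¹} |P₁ − P₂|^{α/40}; i.e. the weighted C¹ space embeds continuously into the Hölder space C^{α/40}. -/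
open Real MeasureTheory Set

noncomputable section

namespace Paper

lemma supDom_nonneg (g : ℝ → ℝ → ℝ) : 0 ≤ supDom g :=
  Real.iSup_nonneg fun _ => Real.iSup_nonneg fun _ => abs_nonneg _

lemma le_supDom {g : ℝ → ℝ → ℝ} (h : BddDom g) {R b : ℝ} (hR : 0 < R)
    (hb : b ∈ Set.Ioo (0:ℝ) (Real.pi/2)) : |g R b| ≤ supDom g := by
  obtain ⟨M, hM⟩ := h
  have hne : Nonempty (Set.Ioo (0:ℝ) (Real.pi/2)) := ⟨⟨b, hb⟩⟩
  have h1 : ∀ R : Set.Ioi (0:ℝ), BddAbove (Set.range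
      fun β : Set.Ioo (0:ℝ) (Real.pi/2) => |g R.1 β.1|) := by
    intro R
    refine ⟨M, ?_⟩
    rintro _ ⟨β, rfl⟩
    exact hM R.1 R.2 β.1 β.2
  have h2 : BddAbove (Set.range fun R : Set.Ioi (0:ℝ) =>
      ⨆ β : Set.Ioo (0:ℝ) (Real.pi/2), |g R.1 β.1|) := by
    refine ⟨M, ?_⟩
    rintro _ ⟨R, rfl⟩
    exact ciSup_le fun β => hM R.1 R.2 β.1 β.2
  calc |g R b| ≤ ⨆ β : Set.Ioo (0:ℝ) (Real.pi/2), |g R β.1| :=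
        le_ciSup (h1 ⟨R, hR⟩) ⟨b, hb⟩
    _ ≤ supDom g := le_ciSup h2 ⟨R, hR⟩

lemma polar_ex (α x y : ℝ) (hx : 0 < x) (hy : 0 < y) :
    ∃ r b : ℝ, 0 < r ∧ b ∈ Set.Ioo (0:ℝ) (Real.pi/2) ∧ Real.arctan (y/x) = b ∧
      x = r * Real.cos b ∧ y = r * Real.sin b ∧ (x^2+y^2) ^ (α/2) = r ^ α := by
  have hs : 0 < x^2+y^2 := by positivity
  have e : Real.sqrt (1 + (y/x)^2) = Real.sqrt (x^2+y^2) / x := by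
    rw [show 1 + (y/x)^2 = (x^2+y^2)/x^2 by field_simp, Real.sqrt_div hs.le,
      Real.sqrt_sq hx.le]
  have hr : 0 < Real.sqrt (x^2+y^2) := Real.sqrt_pos.2 hs
  refine ⟨Real.sqrt (x^2+y^2), Real.arctan (y/x), hr,
    ⟨Real.arctan_pos.2 (by positivity), Real.arctan_lt_pi_div_two _⟩, rfl, ?_, ?_, ?_⟩
  · rw [Real.cos_arctan, e]; field_simp
  · rw [Real.sin_arctan, e]; field_simp
  · rw [Real.sqrt_eq_rpow, ← Real.rpow_mul hs.le]; congr 1; ring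

lemma rpow_sub_le {k a b : ℝ} (hk : 0 < k) (hk1 : k ≤ 1) (ha : 0 ≤ a) (hab : a ≤ b) :
    b ^ k - a ^ k ≤ (b - a) ^ k := by
  have := Real.rpow_add_le_add_rpow (sub_nonneg.2 hab) ha hk.le hk1
  rw [sub_add_cancel] at this
  linarith

lemma sin_bound {k b : ℝ} (hk1 : k ≤ 1) (hb : b ∈ Set.Ioo (0:ℝ) (Real.pi/2)) :
    Real.sin (2*b) ^ (k-1) ≤ b ^ (k-1) + (Real.pi/2 - b) ^ (k-1) := by
  obtain ⟨h0, h1⟩ := hb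
  have hp := Real.pi_pos
  have hp4 := Real.pi_le_four
  have key : ∀ t : ℝ, 0 < t → t ≤ Real.pi/4 → t ≤ Real.sin (2*t) := by
    intro t ht ht'
    have := Real.mul_le_sin (x := 2*t) (by linarith) (by linarith)
    refine le_trans ?_ this
    rw [div_mul_eq_mul_div, le_div_iff₀ hp]
    nlinarith
  rcases le_total b (Real.pi/4) with h | h
  · have := Real.rpow_le_rpow_of_nonpos h0 (key b h0 h) (by linarith : k - 1 ≤ 0)
    have h2 : 0 ≤ (Real.pi/2 - b) ^ (k-1) := Real.rpow_nonneg (by linarith) _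
    linarith
  · have h3 := key (Real.pi/2 - b) (by linarith) (by linarith)
    rw [show 2*(Real.pi/2 - b) = Real.pi - 2*b by ring, Real.sin_pi_sub] at h3
    have := Real.rpow_le_rpow_of_nonpos (by linarith) h3 (by linarith : k - 1 ≤ 0)
    have h2 : 0 ≤ b ^ (k-1) := Real.rpow_nonneg h0.le _
    linarith

lemma angular {k K : ℝ} (hk : 0 < k) (hk1 : k ≤ 1) (hK : 0 ≤ K) {g : ℝ → ℝ}
    (hd : ∀ b ∈ Set.Ioo (0:ℝ) (Real.pi/2), DifferentiableAt ℝ g b)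
    (hg : ∀ b ∈ Set.Ioo (0:ℝ) (Real.pi/2), |deriv g b| ≤ K * Real.sin (2*b) ^ (k-1))
    {a b : ℝ} (ha : a ∈ Set.Ioo (0:ℝ) (Real.pi/2)) (hb : b ∈ Set.Ioo (0:ℝ) (Real.pi/2)) :
    |g a - g b| ≤ 2 / k * K * |a - b| ^ k := by
  wlog hab : a ≤ b generalizing a b
  · rw [abs_sub_comm, abs_sub_comm a]
    exact this hb ha (le_of_not_ge hab)
  set G : ℝ → ℝ := fun t => K * ((t ^ k - (Real.pi/2 - t) ^ k) / k) with hG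
  have hGd : ∀ t ∈ Set.Ioo (0:ℝ) (Real.pi/2),
      HasDerivAt G (K * (t ^ (k-1) + (Real.pi/2 - t) ^ (k-1))) t := by
    intro t ht
    have h1 := Real.hasDerivAt_rpow_const (x := t) (p := k) (Or.inl ht.1.ne')
    have h2 := ((hasDerivAt_id t).const_sub (Real.pi/2)).rpow_const (p := k)
      (Or.inl (sub_pos.2 ht.2).ne')
    have h3 := ((h1.sub h2).div_const k).const_mul K
    refine h3.congr_deriv ?_
    simp only [id]
    field_simp
    ring
  have hb' : ∀ t ∈ Set.Ioo (0:ℝ) (Real.pi/2),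
      |deriv g t| ≤ K * (t ^ (k-1) + (Real.pi/2 - t) ^ (k-1)) := fun t ht =>
    (hg t ht).trans (mul_le_mul_of_nonneg_left (sin_bound hk1 ht) hK)
  have m1 : MonotoneOn (fun t => G t - g t) (Set.Ioo (0:ℝ) (Real.pi/2)) := by
    have hD : ∀ t ∈ Set.Ioo (0:ℝ) (Real.pi/2), HasDerivAt (fun t => G t - g t) _ t :=
      fun t ht => (hGd t ht).sub (hd t ht).hasDerivAt
    refine monotoneOn_of_deriv_nonneg (convex_Ioo _ _)
      (fun t ht => (hD t ht).continuousAt.continuousWithinAt) ?_ ?_ <;> rw [interior_Ioo]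
    · exact fun t ht => (hD t ht).differentiableAt.differentiableWithinAt
    · intro t ht
      rw [(hD t ht).deriv]
      linarith [(abs_le.1 (hb' t ht)).2]
  have m2 : MonotoneOn (fun t => G t + g t) (Set.Ioo (0:ℝ) (Real.pi/2)) := by
    have hD : ∀ t ∈ Set.Ioo (0:ℝ) (Real.pi/2), HasDerivAt (fun t => G t + g t) _ t :=
      fun t ht => (hGd t ht).add (hd t ht).hasDerivAt
    refine monotoneOn_of_deriv_nonneg (convex_Ioo _ _)
      (fun t ht => (hD t ht).continuousAt.continuousWithinAt) ?_ ?_ <;> rw [interior_Ioo]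
    · exact fun t ht => (hD t ht).differentiableAt.differentiableWithinAt
    · intro t ht
      rw [(hD t ht).deriv]
      linarith [(abs_le.1 (hb' t ht)).1]
  have i1 := m1 ha hb hab
  have i2 := m2 ha hb hab
  have i3 : |g a - g b| ≤ G b - G a := abs_le.2 ⟨by linarith, by linarith⟩
  refine i3.trans ?_
  have j1 := rpow_sub_le hk hk1 ha.1.le hab
  have j2 := rpow_sub_le hk hk1 (sub_pos.2 hb.2).le (sub_le_sub_left hab (Real.pi/2))
  rw [show Real.pi/2 - a - (Real.pi/2 - b) = b - a by ring] at j2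
  rw [abs_sub_comm, abs_of_nonneg (sub_nonneg.2 hab)]
  have : G b - G a = K / k * ((b^k - a^k) + ((Real.pi/2 - a)^k - (Real.pi/2-b)^k)) := by
    simp only [hG]; field_simp; ring
  rw [this, show 2 / k * K * (b-a)^k = K / k * (2 * (b-a)^k) by ring]
  exact mul_le_mul_of_nonneg_left (by linarith) (by positivity)

lemma geom {r₁ r₂ b₁ b₂ : ℝ} (h1 : 0 < r₁) (h : r₁ ≤ r₂)
    (hb₁ : b₁ ∈ Set.Ioo (0:ℝ) (Real.pi/2)) (hb₂ : b₂ ∈ Set.Ioo (0:ℝ) (Real.pi/2)) :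
    |r₁ - r₂| ≤ Real.sqrt ((r₁ * Real.cos b₁ - r₂ * Real.cos b₂)^2
      + (r₁ * Real.sin b₁ - r₂ * Real.sin b₂)^2) ∧
    r₁ * |b₁ - b₂| ≤ 2 * Real.sqrt ((r₁ * Real.cos b₁ - r₂ * Real.cos b₂)^2
      + (r₁ * Real.sin b₁ - r₂ * Real.sin b₂)^2) := by
  have hp := Real.pi_pos
  have hp4 := Real.pi_le_four
  have e : (r₁ * Real.cos b₁ - r₂ * Real.cos b₂)^2 + (r₁ * Real.sin b₁ - r₂ * Real.sin b₂)^2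
      = (r₁ - r₂)^2 + 2 * (r₁ * r₂) * (1 - Real.cos (b₁ - b₂)) := by
    rw [Real.cos_sub]
    linear_combination r₁^2 * Real.sin_sq_add_cos_sq b₁ + r₂^2 * Real.sin_sq_add_cos_sq b₂
  rw [e]
  have hc : 0 ≤ 1 - Real.cos (b₁ - b₂) := by linarith [Real.cos_le_one (b₁ - b₂)]
  have hrr : r₁ * r₁ ≤ r₁ * r₂ := mul_le_mul_of_nonneg_left h h1.le
  have hc2 : (b₁ - b₂)^2 / 8 ≤ 1 - Real.cos (b₁ - b₂) := by
    have h3 := Real.cos_le_one_sub_mul_cos_sq (x := b₁ - b₂)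
      (abs_le.2 ⟨by linarith [hb₁.1, hb₂.2], by linarith [hb₁.2, hb₂.1]⟩)
    have h4 : (1:ℝ)/8 ≤ 2 / Real.pi^2 := by
      rw [div_le_div_iff₀ (by norm_num) (by positivity)]; nlinarith
    nlinarith [mul_le_mul_of_nonneg_right h4 (sq_nonneg (b₁ - b₂))]
  constructor
  · apply Real.le_sqrt_of_sq_le
    rw [sq_abs]
    have : 0 ≤ 2 * (r₁ * r₂) * (1 - Real.cos (b₁ - b₂)) :=
      mul_nonneg (by nlinarith) hc
    linarith
  · have : r₁ * |b₁ - b₂| / 2 ≤ Real.sqrt ((r₁ - r₂)^2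
        + 2 * (r₁ * r₂) * (1 - Real.cos (b₁ - b₂))) := by
      apply Real.le_sqrt_of_sq_le
      rw [div_pow, mul_pow, sq_abs]
      have i1 := mul_le_mul_of_nonneg_right hrr hc
      have i2 := mul_le_mul_of_nonneg_left hc2 (mul_self_nonneg r₁)
      nlinarith [sq_nonneg (r₁ - r₂)]
    linarith

lemma core (α : ℝ) (hα : 0 < α) (hα' : α ≤ 1/10) (f : ℝ → ℝ → ℝ)
    (hf : ContDiffOn ℝ 1 (Function.uncurry f)
        (Set.Ioi (0:ℝ) ×ˢ Set.Icc (0:ℝ) (Real.pi/2)))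
    (hfin : C1Fin α f) {r₁ r₂ b₁ b₂ d : ℝ} (h1 : 0 < r₁) (h : r₁ ≤ r₂)
    (hb₁ : b₁ ∈ Set.Ioo (0:ℝ) (Real.pi/2)) (hb₂ : b₂ ∈ Set.Ioo (0:ℝ) (Real.pi/2))
    (hd1 : |r₁ - r₂| ≤ d) (hd2 : r₁ * |b₁ - b₂| ≤ 2 * d) :
    |f (r₁^α) b₁ - f (r₂^α) b₂| ≤ (160/α + 2) * C1norm α f * d ^ (α/40) := by
  have h2 : 0 < r₂ := h1.trans_le h
  have hd : 0 ≤ d := (abs_nonneg _).trans hd1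
  obtain ⟨hf0, hfR, hfb⟩ := hfin
  set M := C1norm α f with hM
  have n0 := supDom_nonneg f
  have n1 := supDom_nonneg (fun R β => (1+R)/R * DR f R β)
  have n2 := supDom_nonneg (fun R β =>
      (1 + (R * Real.sin (2*β) ^ α) ^ (-(1/40 : ℝ))) * Dbeta f R β)
  have hMdef : M = supDom f + supDom (fun R β => (1+R)/R * DR f R β)
    + supDom (fun R β =>
      (1 + (R * Real.sin (2*β) ^ α) ^ (-(1/40 : ℝ))) * Dbeta f R β) := rfl
  have hM0 : 0 ≤ M := by rw [hMdef]; positivity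
  have diff : ∀ R b : ℝ, 0 < R → b ∈ Set.Ioo (0:ℝ) (Real.pi/2) →
      DifferentiableAt ℝ (Function.uncurry f) (R, b) := by
    intro R b hR hb
    refine (hf.contDiffAt ?_).differentiableAt one_ne_zero
    exact prod_mem_nhds (Ioi_mem_nhds hR) (Icc_mem_nhds hb.1 hb.2)
  have diffR : ∀ R b : ℝ, 0 < R → b ∈ Set.Ioo (0:ℝ) (Real.pi/2) →
      DifferentiableAt ℝ (fun r => f r b) R := by
    intro R b hR hb
    exact (diff R b hR hb).comp (f := fun r : ℝ => (r, b)) R (by fun_prop)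
  have diffb : ∀ R b : ℝ, 0 < R → b ∈ Set.Ioo (0:ℝ) (Real.pi/2) →
      DifferentiableAt ℝ (fun t => f R t) b := by
    intro R b hR hb
    exact (diff R b hR hb).comp (f := fun t : ℝ => (R, t)) b (by fun_prop)
  have hR₁ : 0 < r₁^α := Real.rpow_pos_of_pos h1 _
  have hR₂ : 0 < r₂^α := Real.rpow_pos_of_pos h2 _
  have hk : 0 < α/40 := by positivity
  have hk1 : α/40 ≤ 1 := by linarith
  -- angular part
  have A : |f (r₁^α) b₁ - f (r₁^α) b₂| ≤ 160/α * M * d^(α/40) := by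
    have hg : ∀ b ∈ Set.Ioo (0:ℝ) (Real.pi/2), |deriv (fun t => f (r₁^α) t) b| ≤
        (M * r₁^(α/40)) * Real.sin (2*b) ^ (α/40-1) := by
      intro b hb
      have hs : 0 < Real.sin (2*b) :=
        Real.sin_pos_of_pos_of_lt_pi (by linarith [hb.1]) (by linarith [hb.2])
      have h3 := (le_supDom hfb hR₁ hb).trans (by linarith : _ ≤ M)
      simp only [Dbeta] at h3
      have hw : (r₁^α * Real.sin (2*b) ^ α) ^ (-(1/40 : ℝ))
          = (r₁^(α/40) * Real.sin (2*b) ^ (α/40))⁻¹ := by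
        rw [Real.rpow_neg (by positivity), Real.mul_rpow (by positivity) (by positivity),
          ← Real.rpow_mul h1.le, ← Real.rpow_mul hs.le]
        simp only [mul_one_div]
      rw [hw, abs_mul, abs_mul, abs_of_pos hs] at h3
      have hP : 0 < r₁^(α/40) * Real.sin (2*b) ^ (α/40) := by positivity
      have hP' := inv_pos.2 hP
      rw [abs_of_pos (by linarith)] at h3
      have hD := abs_nonneg (deriv (fun t => f (r₁^α) t) b)
      have h4 : (r₁^(α/40) * Real.sin (2*b) ^ (α/40))⁻¹ *
          (Real.sin (2*b) * |deriv (fun t => f (r₁^α) t) b|) ≤ M := by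
        have : 0 ≤ Real.sin (2*b) * |deriv (fun t => f (r₁^α) t) b| := by positivity
        linarith
      rw [inv_mul_le_iff₀ hP] at h4
      rw [Real.rpow_sub_one hs.ne', ← mul_div_assoc, le_div_iff₀ hs]
      linarith
    have h5 := angular hk hk1 (by positivity) (fun b hb => diffb _ b hR₁ hb) hg hb₁ hb₂
    refine h5.trans ?_
    have h6 : (r₁ * |b₁ - b₂|)^(α/40) ≤ 2 * d^(α/40) := by
      refine (Real.rpow_le_rpow (by positivity) hd2 hk.le).trans ?_
      rw [Real.mul_rpow (by norm_num) hd]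
      refine mul_le_mul_of_nonneg_right ?_ (by positivity)
      calc (2:ℝ)^(α/40) ≤ 2^(1:ℝ) := Real.rpow_le_rpow_of_exponent_le (by norm_num) hk1
        _ = 2 := Real.rpow_one _
    rw [Real.mul_rpow h1.le (abs_nonneg _)] at h6
    calc 2 / (α/40) * (M * r₁^(α/40)) * |b₁ - b₂|^(α/40)
        = 80/α * M * (r₁^(α/40) * |b₁ - b₂|^(α/40)) := by field_simp; ring
      _ ≤ 80/α * M * (2 * d^(α/40)) := mul_le_mul_of_nonneg_left h6 (by positivity)
      _ = _ := by ring
  -- radial part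
  have B : |f (r₁^α) b₂ - f (r₂^α) b₂| ≤ 2 * M * d^(α/40) := by
    rcases le_total d 1 with hd' | hd'
    · have hg : ∀ R ∈ Set.Ioi (0:ℝ), ‖deriv (fun r => f r b₂) R‖ ≤ M := by
        intro R hR
        have hR : 0 < R := hR
        have h3 := (le_supDom hfR hR hb₂).trans (by linarith : _ ≤ M)
        simp only [DR] at h3
        rw [← mul_assoc, div_mul_cancel₀ _ hR.ne', abs_mul, abs_of_pos (by linarith)] at h3
        rw [Real.norm_eq_abs]
        have := mul_nonneg hR.le (abs_nonneg (deriv (fun r => f r b₂) R))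
        linarith
      have h4 := (convex_Ioi (0:ℝ)).norm_image_sub_le_of_norm_deriv_le
        (fun R hR => diffR R b₂ hR hb₂) hg (x := r₂^α) (y := r₁^α) hR₂ hR₁
      rw [Real.norm_eq_abs, Real.norm_eq_abs] at h4
      refine h4.trans ?_
      have h5 : |r₁^α - r₂^α| ≤ d^(α/40) := by
        rw [abs_sub_comm, abs_of_nonneg (sub_nonneg.2 (Real.rpow_le_rpow h1.le h hα.le))]
        rw [abs_sub_comm, abs_of_nonneg (sub_nonneg.2 h)] at hd1
        refine (rpow_sub_le hα (by linarith) h1.le h).trans ?_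
        refine (Real.rpow_le_rpow (sub_nonneg.2 h) hd1 hα.le).trans ?_
        exact Real.rpow_le_rpow_of_exponent_ge' hd hd' hk.le (by linarith)
      have h6 := mul_le_mul_of_nonneg_left h5 hM0
      have : 0 ≤ M * d^(α/40) := by positivity
      linarith
    · have i1 := le_supDom hf0 hR₁ hb₂
      have i2 := le_supDom hf0 hR₂ hb₂
      have i3 := abs_sub (f (r₁^α) b₂) (f (r₂^α) b₂)
      have i4 : 1 ≤ d^(α/40) := Real.one_le_rpow hd' hk.le
      have i5 : supDom f ≤ M := by rw [hMdef]; linarith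
      nlinarith
  have := abs_sub_le (f (r₁^α) b₁) (f (r₁^α) b₂) (f (r₂^α) b₂)
  calc _ ≤ _ := this
    _ ≤ 160/α * M * d^(α/40) + 2 * M * d^(α/40) := add_le_add A B
    _ = _ := by ring

/-- the weighted `C¹` space embeds continuously into the Hölder
space `C^{α/40}` (in the Cartesian variables of the first quadrant). -/
theorem C1_embeds_into_Holder (α : ℝ) (hα : 0 < α) (hα' : α ≤ 1/10) :
    ∃ C : ℝ, ∀ f : ℝ → ℝ → ℝ,
      ContDiffOn ℝ 1 (Function.uncurry f)
        (Set.Ioi (0:ℝ) ×ˢ Set.Icc (0:ℝ) (Real.pi/2)) →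
      (∀ R : ℝ, 0 < R → f R (Real.pi/2) = 0) →
      C1Fin α f →
      ∀ x₁ y₁ x₂ y₂ : ℝ, 0 < x₁ → 0 < y₁ → 0 < x₂ → 0 < y₂ →
        |f ((x₁^2+y₁^2) ^ (α/2)) (Real.arctan (y₁/x₁))
            - f ((x₂^2+y₂^2) ^ (α/2)) (Real.arctan (y₂/x₂))|
          ≤ C * C1norm α f * (Real.sqrt ((x₁-x₂)^2 + (y₁-y₂)^2)) ^ (α/40) := by
  refine ⟨160/α + 2, ?_⟩
  intro f hf _ hfin x₁ y₁ x₂ y₂ hx₁ hy₁ hx₂ hy₂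
  obtain ⟨r₁, b₁, hr₁, hb₁, e₁, ex₁, ey₁, eR₁⟩ := polar_ex α x₁ y₁ hx₁ hy₁
  obtain ⟨r₂, b₂, hr₂, hb₂, e₂, ex₂, ey₂, eR₂⟩ := polar_ex α x₂ y₂ hx₂ hy₂
  rw [e₁, e₂, eR₁, eR₂, ex₁, ey₁, ex₂, ey₂]
  rcases le_total r₁ r₂ with h | h
  · obtain ⟨g1, g2⟩ := geom hr₁ h hb₁ hb₂
    exact core α hα hα' f hf hfin hr₁ h hb₁ hb₂ g1 g2
  · obtain ⟨g1, g2⟩ := geom hr₂ h hb₂ hb₁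
    rw [abs_sub_comm, sub_sq_comm (r₁ * Real.cos b₁), sub_sq_comm (r₁ * Real.sin b₁)]
    exact core α hα hα' f hf hfin hr₂ h hb₂ hb₁ g1 g2
end Paper
end
end

section
/- There is an absolute constant C such that for every α ∈ (0, 1/1000] and every three times continuously differentiable f on (0,∞)×(0,π/2) with ‖((1+R)³/R²) f‖_{W^{3,∞}} < ∞, the H³ norm of f is finite and ‖f‖_{H³} ≤ C ‖((1+R)³/R²) f‖_{W^{3,∞}}. -/
open Real MeasureTheory Set

noncomputable section

namespace Paper

/-! ### Helper lemmas -/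

/-- The radial factor `R²/(1+R)³`. -/
def vR (R : ℝ) : ℝ := R^2/(1+R)^3

lemma DR_iter_slice (k : ℕ) (f : ℝ → ℝ → ℝ) (R β : ℝ) :
    DR^[k] f R β = DR1^[k] (fun r => f r β) R := by
  induction k generalizing f with
  | zero => rfl
  | succ k ih => rw [Function.iterate_succ_apply, Function.iterate_succ_apply, ih]; rfl

lemma DR1_congr {g h : ℝ → ℝ} (H : ∀ r ∈ Ioi (0:ℝ), g r = h r) :
    ∀ r ∈ Ioi (0:ℝ), DR1 g r = DR1 h r := by
  intro r hr
  have : g =ᶠ[nhds r] h := by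
    filter_upwards [isOpen_Ioi.mem_nhds hr] with x hx using H x hx
  simp only [DR1, this.deriv_eq]

lemma DR1_iter_congr (k : ℕ) {g h : ℝ → ℝ} (H : ∀ r ∈ Ioi (0:ℝ), g r = h r) :
    ∀ r ∈ Ioi (0:ℝ), DR1^[k] g r = DR1^[k] h r := by
  induction k generalizing g h with
  | zero => simpa using H
  | succ k ih =>
    simp only [Function.iterate_succ_apply]
    exact ih (DR1_congr H)

lemma DR1_contDiff {n : ℕ} {g : ℝ → ℝ} (hg : ContDiffOn ℝ ((n+1 : ℕ)) g (Ioi 0)) :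
    ContDiffOn ℝ n (DR1 g) (Ioi 0) := by
  apply contDiffOn_id.mul
  exact hg.deriv_of_isOpen isOpen_Ioi (by norm_cast)

lemma DR1_iter_add (k : ℕ) {g h : ℝ → ℝ} (hg : ContDiffOn ℝ k g (Ioi 0))
    (hh : ContDiffOn ℝ k h (Ioi 0)) :
    ∀ r ∈ Ioi (0:ℝ), DR1^[k] (fun x => g x + h x) r = DR1^[k] g r + DR1^[k] h r := by
  induction k generalizing g h with
  | zero => intro r _; rfl
  | succ k ih =>
    intro r hr
    simp only [Function.iterate_succ_apply]
    rw [← ih (DR1_contDiff hg) (DR1_contDiff hh) r hr]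
    refine DR1_iter_congr k ?_ r hr
    intro x hx
    have h1 : DifferentiableAt ℝ g x :=
      (hg.differentiableOn (by norm_cast)).differentiableAt (isOpen_Ioi.mem_nhds hx)
    have h2 : DifferentiableAt ℝ h x :=
      (hh.differentiableOn (by norm_cast)).differentiableAt (isOpen_Ioi.mem_nhds hx)
    simp only [DR1]
    rw [deriv_fun_add h1 h2]; ring

lemma DR1_iter_const_mul (k : ℕ) (c : ℝ) (g : ℝ → ℝ) :
    DR1^[k] (fun x => c * g x) = fun x => c * DR1^[k] g x := by
  induction k generalizing g with
  | zero => rfl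
  | succ k ih =>
    simp only [Function.iterate_succ_apply]
    rw [← ih]
    congr 1
    funext x
    simp only [DR1, deriv_const_mul_field]; ring

lemma vp_hasDeriv (p : Polynomial ℝ) {r : ℝ} (hr : 0 < r) :
    HasDerivAt (fun x => vR x * p.eval (1/(1+x)))
      (vR r * ((3 * Polynomial.X - 1) * p + (Polynomial.X^2 - Polynomial.X) *
        Polynomial.derivative p).eval (1/(1+r)) / r) r := by
  have h1 : (1 + r) ≠ 0 := by positivity
  have ha : HasDerivAt (fun x : ℝ => 1 + x) 1 r := by
    simpa using (hasDerivAt_id r).const_add (1:ℝ)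
  have hv : HasDerivAt vR ((2*r*(1+r)^3 - r^2*(3*(1+r)^2))/((1+r)^3)^2) r := by
    have := ((hasDerivAt_pow 2 r)).fun_div (ha.fun_pow 3) (by positivity)
    refine HasDerivAt.congr_deriv (f := vR) this ?_
    norm_num
  have ht : HasDerivAt (fun x : ℝ => 1/(1+x)) (-1/(1+r)^2) r := by
    simpa using ha.fun_inv h1
  have hp := (p.hasDerivAt (1/(1+r))).comp r ht
  have := hv.fun_mul hp
  refine this.congr_deriv ?_
  simp only [vR, Polynomial.eval_add, Polynomial.eval_mul, Polynomial.eval_sub,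
    Polynomial.eval_pow, Polynomial.eval_X, Polynomial.eval_one, Polynomial.eval_ofNat,
    Function.comp]
  generalize Polynomial.eval (1 / (1 + r)) p = a
  generalize Polynomial.eval (1 / (1 + r)) (Polynomial.derivative p) = b
  field_simp
  ring

lemma vp_contDiff (p : Polynomial ℝ) (n : ℕ) :
    ContDiffOn ℝ n (fun x => vR x * p.eval (1/(1+x))) (Ioi 0) := by
  have h0 : ∀ x ∈ Ioi (0:ℝ), (1 + x) ≠ 0 := by
    intro x hx; have : (0:ℝ) < x := hx; positivity
  have h1 : ContDiffOn ℝ n (fun x : ℝ => 1 + x) (Ioi 0) := by fun_prop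
  have hv : ContDiffOn ℝ n vR (Ioi 0) := by
    unfold vR
    exact ContDiffOn.div (by fun_prop) (h1.pow 3) (fun x hx => pow_ne_zero 3 (h0 x hx))
  refine hv.mul ?_
  have h2 : ContDiffOn ℝ n (fun x : ℝ => 1/(1 + x)) (Ioi 0) := contDiffOn_const.div h1 h0
  have h3 : ContDiff ℝ n (fun x => p.eval x) := by
    simpa [Polynomial.aeval_def] using p.contDiff_aeval (𝕜 := ℝ) n
  exact h3.comp_contDiffOn h2

lemma poly_bdd (p : Polynomial ℝ) : ∃ C : ℝ, 0 ≤ C ∧ ∀ r : ℝ, 0 < r → |p.eval (1/(1+r))| ≤ C := by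
  obtain ⟨C, hC⟩ := (isCompact_Icc (a := (0:ℝ)) (b := 1)).exists_bound_of_continuousOn
    (f := fun x => p.eval x) p.continuous.continuousOn
  have hC0 : 0 ≤ C := (norm_nonneg _).trans (hC 0 (by simp))
  refine ⟨C, hC0, fun r hr => ?_⟩
  apply hC
  constructor
  · positivity
  · rw [div_le_one (by positivity)]; linarith

lemma vR_nonneg {r : ℝ} (hr : 0 < r) : 0 ≤ vR r := by unfold vR; positivity

lemma leibniz (k : ℕ) : ∀ p : Polynomial ℝ, ∃ C : ℝ, 0 ≤ C ∧ ∀ G : ℝ → ℝ,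
    ContDiffOn ℝ k G (Ioi 0) → ∀ r ∈ Ioi (0:ℝ),
    |DR1^[k] (fun x => vR x * p.eval (1/(1+x)) * G x) r|
      ≤ C * vR r * ∑ i ∈ Finset.range (k+1), |DR1^[i] G r| := by
  induction k with
  | zero =>
    intro p
    obtain ⟨C, hC0, hC⟩ := poly_bdd p
    refine ⟨C, hC0, fun G _ r hr => ?_⟩
    simp only [Function.iterate_zero, id, zero_add, Finset.range_one, Finset.sum_singleton]
    rw [abs_mul, abs_mul, abs_of_nonneg (vR_nonneg hr), mul_comm C]
    have := hC r hr
    have := vR_nonneg hr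
    gcongr
  | succ k ih =>
    intro p
    set q : Polynomial ℝ := (3 * Polynomial.X - 1) * p + (Polynomial.X^2 - Polynomial.X) *
        Polynomial.derivative p with hq
    obtain ⟨C1, hC10, hC1⟩ := ih q
    obtain ⟨C2, hC20, hC2⟩ := ih p
    refine ⟨C1 + C2, by positivity, fun G hG r hr => ?_⟩
    have hGk : ContDiffOn ℝ k G (Ioi 0) := hG.of_le (by norm_cast; omega)
    have hDG := DR1_contDiff hG
    have hv := vR_nonneg hr
    have e : DR1^[k+1] (fun x => vR x * p.eval (1/(1+x)) * G x) r =
        DR1^[k] (fun x => vR x * q.eval (1/(1+x)) * G x) r +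
        DR1^[k] (fun x => vR x * p.eval (1/(1+x)) * DR1 G x) r := by
      rw [Function.iterate_succ_apply, ← DR1_iter_add k ((vp_contDiff q k).mul hGk)
        ((vp_contDiff p k).mul hDG) r hr]
      refine DR1_iter_congr k ?_ r hr
      intro x hx
      have h1 : DifferentiableAt ℝ G x :=
        (hG.differentiableOn (by norm_cast)).differentiableAt (isOpen_Ioi.mem_nhds hx)
      have h2 := ((vp_hasDeriv p hx).fun_mul h1.hasDerivAt).deriv
      have hx0 : x ≠ 0 := ne_of_gt hx
      simp only [DR1]
      rw [h2, ← hq]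
      field_simp
    rw [e]
    have b1 := hC1 G hGk r hr
    have b2 := hC2 (DR1 G) hDG r hr
    have s1 : ∑ i ∈ Finset.range (k+1), |DR1^[i] G r| ≤
        ∑ i ∈ Finset.range (k+1+1), |DR1^[i] G r| := by
      rw [Finset.sum_range_succ _ (k+1)]
      linarith [abs_nonneg (DR1^[k+1] G r)]
    have s2 : ∑ i ∈ Finset.range (k+1), |DR1^[i] (DR1 G) r| ≤
        ∑ i ∈ Finset.range (k+1+1), |DR1^[i] G r| := by
      rw [Finset.sum_range_succ' _ (k+1)]
      simp only [Function.iterate_succ_apply]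
      linarith [abs_nonneg (DR1^[0] G r)]
    calc _ ≤ _ := abs_add_le _ _
      _ ≤ C1 * vR r * _ + C2 * vR r * _ := add_le_add b1 b2
      _ ≤ C1 * vR r * ∑ i ∈ Finset.range (k+1+1), |DR1^[i] G r|
          + C2 * vR r * ∑ i ∈ Finset.range (k+1+1), |DR1^[i] G r| := by gcongr
      _ = _ := by ring

lemma leibniz1 (k : ℕ) : ∃ C : ℝ, 0 ≤ C ∧ ∀ G : ℝ → ℝ,
    ContDiffOn ℝ k G (Ioi 0) → ∀ r ∈ Ioi (0:ℝ), ∀ M : ℝ, (∀ i ≤ k, |DR1^[i] G r| ≤ M) →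
    |DR1^[k] (fun x => vR x * G x) r| ≤ C * vR r * M := by
  obtain ⟨C, hC, h⟩ := leibniz k 1
  refine ⟨C * (k+1), by positivity, fun G hG r hr M hM => ?_⟩
  have := h G hG r hr
  simp only [Polynomial.eval_one, mul_one] at this
  refine this.trans ?_
  have hs : ∑ i ∈ Finset.range (k+1), |DR1^[i] G r| ≤ (k+1) * M := by
    have := Finset.sum_le_card_nsmul (Finset.range (k+1)) (fun i => |DR1^[i] G r|) M
      (fun i hi => hM i (by simpa [Nat.lt_succ_iff] using hi))
    simpa using this
  have hv := vR_nonneg hr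
  calc _ ≤ C * vR r * ((k+1) * M) := by gcongr
    _ = _ := by ring

lemma isOpen_Qdom : IsOpen Qdom := isOpen_Ioi.prod isOpen_Ioo

lemma Dbeta_contDiff {n : ℕ} {g : ℝ → ℝ → ℝ}
    (hg : ContDiffOn ℝ ((n+1 : ℕ)) (Function.uncurry g) Qdom) :
    ContDiffOn ℝ n (Function.uncurry (Dbeta g)) Qdom := by
  have h1 : ContDiffOn ℝ n (fun x => fderiv ℝ (Function.uncurry g) x) Qdom :=
    hg.fderiv_of_isOpen isOpen_Qdom (by norm_cast)
  have h2 : ContDiffOn ℝ n (fun x : ℝ × ℝ => Real.sin (2 * x.2) *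
      fderiv ℝ (Function.uncurry g) x (0,1)) Qdom := by
    refine ContDiffOn.mul (by fun_prop) (h1.clm_apply contDiffOn_const)
  refine h2.congr ?_
  rintro ⟨R, β⟩ hx
  have hd : DifferentiableAt ℝ (Function.uncurry g) (R, β) :=
    (hg.differentiableOn (by norm_cast)).differentiableAt (isOpen_Qdom.mem_nhds hx)
  have hc : HasDerivAt (fun b : ℝ => (R, b)) ((0:ℝ), (1:ℝ)) β :=
    (hasDerivAt_const β R).prodMk (hasDerivAt_id β)
  have := (hd.hasFDerivAt.comp_hasDerivAt β hc).deriv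
  simp only [Function.uncurry_apply_pair, Dbeta]
  rw [← this]; rfl

lemma DR_contDiff {n : ℕ} {g : ℝ → ℝ → ℝ}
    (hg : ContDiffOn ℝ ((n+1 : ℕ)) (Function.uncurry g) Qdom) :
    ContDiffOn ℝ n (Function.uncurry (DR g)) Qdom := by
  have h1 : ContDiffOn ℝ n (fun x => fderiv ℝ (Function.uncurry g) x) Qdom :=
    hg.fderiv_of_isOpen isOpen_Qdom (by norm_cast)
  have h2 : ContDiffOn ℝ n (fun x : ℝ × ℝ => x.1 *
      fderiv ℝ (Function.uncurry g) x (1,0)) Qdom := by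
    refine ContDiffOn.mul (by fun_prop) (h1.clm_apply contDiffOn_const)
  refine h2.congr ?_
  rintro ⟨R, β⟩ hx
  have hd : DifferentiableAt ℝ (Function.uncurry g) (R, β) :=
    (hg.differentiableOn (by norm_cast)).differentiableAt (isOpen_Qdom.mem_nhds hx)
  have hc : HasDerivAt (fun b : ℝ => (b, β)) ((1:ℝ), (0:ℝ)) R :=
    (hasDerivAt_id R).prodMk (hasDerivAt_const R β)
  have := (hd.hasFDerivAt.comp_hasDerivAt R hc).deriv
  simp only [Function.uncurry_apply_pair, DR]
  rw [← this]; rfl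

lemma Dbeta_iter_contDiff (j n : ℕ) {g : ℝ → ℝ → ℝ}
    (hg : ContDiffOn ℝ ((n+j : ℕ)) (Function.uncurry g) Qdom) :
    ContDiffOn ℝ n (Function.uncurry (Dbeta^[j] g)) Qdom := by
  induction j generalizing g with
  | zero => exact hg
  | succ j ih => exact ih (Dbeta_contDiff hg)

lemma DR_iter_contDiff (j n : ℕ) {g : ℝ → ℝ → ℝ}
    (hg : ContDiffOn ℝ ((n+j : ℕ)) (Function.uncurry g) Qdom) :
    ContDiffOn ℝ n (Function.uncurry (DR^[j] g)) Qdom := by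
  induction j generalizing g with
  | zero => exact hg
  | succ j ih => exact ih (DR_contDiff hg)

lemma slice_contDiff {n : ℕ} {g : ℝ → ℝ → ℝ} (hg : ContDiffOn ℝ n (Function.uncurry g) Qdom)
    {β : ℝ} (hβ : β ∈ Ioo (0:ℝ) (Real.pi/2)) : ContDiffOn ℝ n (fun r => g r β) (Ioi 0) := by
  have : ContDiffOn ℝ n (fun r : ℝ => (r, β)) (Ioi 0) := by fun_prop
  exact hg.comp this (fun r hr => ⟨hr, hβ⟩)

lemma Dbeta_iter_mul (j : ℕ) (w : ℝ → ℝ) (g : ℝ → ℝ → ℝ) :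
    Dbeta^[j] (fun R β => w R * g R β) = fun R β => w R * Dbeta^[j] g R β := by
  induction j generalizing g with
  | zero => rfl
  | succ j ih =>
    simp only [Function.iterate_succ_apply]
    rw [← ih]
    congr 1
    funext R β
    simp only [Dbeta, deriv_const_mul_field]; ring

lemma le_supDom_s17 {g : ℝ → ℝ → ℝ} (hg : BddDom g) {R β : ℝ} (hR : R ∈ Ioi (0:ℝ))
    (hβ : β ∈ Ioo (0:ℝ) (Real.pi/2)) : |g R β| ≤ supDom g := by
  obtain ⟨M, hM⟩ := hg
  have hne : Nonempty (Ioo (0:ℝ) (Real.pi/2)) := ⟨⟨β, hβ⟩⟩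
  unfold supDom
  have h1 : |g R β| ≤ ⨆ b : Ioo (0:ℝ) (Real.pi/2), |g R b.1| :=
    le_ciSup (f := fun b : Ioo (0:ℝ) (Real.pi/2) => |g R b.1|)
      ⟨M, by rintro _ ⟨b, rfl⟩; exact hM R hR b.1 b.2⟩ ⟨β, hβ⟩
  refine h1.trans ?_
  exact le_ciSup (f := fun r : Ioi (0:ℝ) => ⨆ b : Ioo (0:ℝ) (Real.pi/2), |g r.1 b.1|)
    ⟨M, by rintro _ ⟨r, rfl⟩; exact ciSup_le (fun b => hM r.1 r.2 b.1 b.2)⟩ ⟨R, hR⟩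

lemma sin_pos' {β : ℝ} (hβ : β ∈ Ioo (0:ℝ) (Real.pi/2)) : 0 < Real.sin (2*β) :=
  Real.sin_pos_of_pos_of_lt_pi (by linarith [hβ.1]) (by linarith [hβ.2])

/-- majorant of the angular weight -/
lemma sin_rpow_le {s β : ℝ} (hs1 : s ≤ 1) (hβ : β ∈ Ioo (0:ℝ) (Real.pi/2)) :
    Real.sin (2*β) ^ (s-1) ≤ β ^ (s-1) + (Real.pi/2 - β) ^ (s-1) := by
  have hb0 := hβ.1
  have hb1 : 0 < Real.pi/2 - β := by linarith [hβ.2]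
  have key : ∀ x : ℝ, 0 < x → x ≤ Real.pi/4 → x ≤ Real.sin (2*x) := by
    intro x hx hx4
    have := Real.mul_le_sin (x := 2*x) (by linarith) (by linarith)
    have hpi := Real.pi_pos
    have h4 := Real.pi_le_four
    refine le_trans ?_ this
    rw [div_mul_eq_mul_div, le_div_iff₀ hpi]
    nlinarith
  have p1 : 0 ≤ β ^ (s-1) := by positivity
  have p2 : 0 ≤ (Real.pi/2 - β) ^ (s-1) := by positivity
  rcases le_total β (Real.pi/4) with h | h
  · have := Real.rpow_le_rpow_of_nonpos hb0 (key β hb0 h) (by linarith : s - 1 ≤ 0)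
    linarith
  · have k2 := key (Real.pi/2 - β) hb1 (by linarith)
    have e : Real.sin (2*(Real.pi/2 - β)) = Real.sin (2*β) := by
      rw [show 2*(Real.pi/2 - β) = Real.pi - 2*β by ring, Real.sin_pi_sub]
    rw [e] at k2
    have := Real.rpow_le_rpow_of_nonpos hb1 k2 (by linarith : s - 1 ≤ 0)
    linarith

lemma maj_int {s : ℝ} (hs : 0 < s) (hs1 : s ≤ 1) :
    IntegrableOn (fun β => β ^ (s-1) + (Real.pi/2 - β) ^ (s-1)) (Ioo (0:ℝ) (Real.pi/2)) ∧
    ∫ β in Ioo (0:ℝ) (Real.pi/2), (β ^ (s-1) + (Real.pi/2 - β) ^ (s-1)) ≤ 4 / s := by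
  have hpi := Real.pi_pos
  have i1 : IntervalIntegrable (fun β : ℝ => β ^ (s-1)) volume 0 (Real.pi/2) :=
    intervalIntegral.intervalIntegrable_rpow' (by linarith)
  have i2 : IntervalIntegrable (fun β : ℝ => (Real.pi/2 - β) ^ (s-1)) volume 0 (Real.pi/2) := by
    have := (i1.comp_sub_left (Real.pi/2)).symm
    simpa using this
  have hle : (0:ℝ) ≤ Real.pi/2 := by positivity
  constructor
  · exact ((intervalIntegrable_iff_integrableOn_Ioo_of_le hle).1 (i1.add i2))
  · rw [← integral_Ioc_eq_integral_Ioo, ← intervalIntegral.integral_of_le hle,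
      intervalIntegral.integral_add i1 i2,
      intervalIntegral.integral_comp_sub_left (fun x => x ^ (s-1)) (Real.pi/2)]
    simp only [sub_self, sub_zero]
    rw [integral_rpow (Or.inl (by linarith))]
    have e : s - 1 + 1 = s := by ring
    rw [e, Real.zero_rpow hs.ne', sub_zero, ← add_div]
    have : (Real.pi/2) ^ s ≤ 2 := by
      calc (Real.pi/2) ^ s ≤ (Real.pi/2) ^ (1:ℝ) :=
            Real.rpow_le_rpow_of_exponent_le (by linarith [Real.pi_gt_three]) hs1
        _ ≤ 2 := by rw [Real.rpow_one]; linarith [Real.pi_le_four]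
    gcongr
    linarith

/-- The basic estimate. -/
lemma basic (h φ : ℝ → ℝ → ℝ) (S : ℝ → ℝ) (A : ℝ) (hA : 0 ≤ A)
    (hh : ContinuousOn (Function.uncurry h) Qdom) (hφ : ContinuousOn (Function.uncurry φ) Qdom)
    (hφ0 : ∀ R ∈ Ioi (0:ℝ), ∀ β ∈ Ioo (0:ℝ) (Real.pi/2), 0 ≤ φ R β)
    (hS : IntegrableOn S (Ioo (0:ℝ) (Real.pi/2)))
    (hSB : ∫ β in Ioo (0:ℝ) (Real.pi/2), S β ≤ 400)
    (hS0 : ∀ β ∈ Ioo (0:ℝ) (Real.pi/2), 0 ≤ S β)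
    (hb : ∀ R ∈ Ioi (0:ℝ), ∀ β ∈ Ioo (0:ℝ) (Real.pi/2),
      (h R β)^2 * φ R β ≤ A^2 * (((1+R)^2)⁻¹ * S β)) :
    Integrable2 (fun R β => (h R β)^2 * φ R β) ∧
    norm2 (fun R β => h R β * Real.sqrt (φ R β)) ≤ 40 * A := by
  have hmQ : MeasurableSet Qdom := isOpen_Qdom.measurableSet
  have hvol : (volume : Measure (ℝ × ℝ)).restrict Qdom =
      (volume.restrict (Ioi (0:ℝ))).prod (volume.restrict (Ioo (0:ℝ) (Real.pi/2))) := by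
    rw [Measure.prod_restrict]; rfl
  have hpt : ∀ R ∈ Ioi (0:ℝ), ((1+R)^2)⁻¹ ≤ (1+R^2)⁻¹ := by
    intro R hR
    have : (0:ℝ) < R := hR
    apply inv_anti₀ (by positivity); nlinarith
  have hI : IntegrableOn (fun R : ℝ => (1+R^2)⁻¹) (Ioi 0) := integrable_inv_one_add_sq.integrableOn
  have hprod : IntegrableOn (fun x : ℝ × ℝ => A^2 * ((1+x.1^2)⁻¹ * S x.2)) Qdom := by
    unfold IntegrableOn
    rw [hvol]
    exact (Integrable.mul_prod hI hS).const_mul _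
  have hcont : ContinuousOn (Function.uncurry (fun R β => (h R β)^2 * φ R β)) Qdom :=
    (hh.pow 2).mul hφ
  have hbd : ∀ x ∈ Qdom, Function.uncurry (fun R β => (h R β)^2 * φ R β) x ≤
      A^2 * ((1+x.1^2)⁻¹ * S x.2) := by
    rintro ⟨R, β⟩ ⟨hR, hβ⟩
    refine (hb R hR β hβ).trans ?_
    have := hpt R hR
    have := hS0 β hβ
    dsimp only
    gcongr
  have hnn : ∀ x ∈ Qdom, 0 ≤ Function.uncurry (fun R β => (h R β)^2 * φ R β) x := by
    rintro ⟨R, β⟩ ⟨hR, hβ⟩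
    exact mul_nonneg (sq_nonneg _) (hφ0 R hR β hβ)
  have hint : IntegrableOn (Function.uncurry (fun R β => (h R β)^2 * φ R β)) Qdom := by
    refine Integrable.mono' hprod (hcont.aestronglyMeasurable hmQ) ?_
    refine (ae_restrict_iff' hmQ).2 (Filter.Eventually.of_forall fun x hx => ?_)
    rw [Real.norm_of_nonneg (hnn x hx)]
    exact hbd x hx
  refine ⟨hint, ?_⟩
  have e1 : inner2 (fun R β => h R β * Real.sqrt (φ R β)) (fun R β => h R β * Real.sqrt (φ R β))
      = ∫ x in Qdom, Function.uncurry (fun R β => (h R β)^2 * φ R β) x := by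
    rw [hvol, integral_prod _ (by rw [← hvol]; exact hint)]
    unfold inner2
    refine setIntegral_congr_fun measurableSet_Ioi (fun R hR => ?_)
    refine setIntegral_congr_fun measurableSet_Ioo (fun β hβ => ?_)
    have := Real.mul_self_sqrt (hφ0 R hR β hβ)
    simp only [Function.uncurry_apply_pair]
    calc _ = (h R β)^2 * (Real.sqrt (φ R β) * Real.sqrt (φ R β)) := by ring
      _ = _ := by rw [this]
  have e2 : ∫ x in Qdom, Function.uncurry (fun R β => (h R β)^2 * φ R β) x
      ≤ ∫ x in Qdom, A^2 * ((1+x.1^2)⁻¹ * S x.2) :=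
    setIntegral_mono_on hint hprod hmQ hbd
  have e3 : ∫ x in Qdom, A^2 * ((1+x.1^2)⁻¹ * S x.2) =
      A^2 * ((∫ R in Ioi (0:ℝ), (1+R^2)⁻¹) * ∫ β in Ioo (0:ℝ) (Real.pi/2), S β) := by
    rw [hvol, integral_const_mul, integral_prod_mul (fun R : ℝ => (1+R^2)⁻¹) S]
  have e4 : ∫ R in Ioi (0:ℝ), (1+R^2)⁻¹ = Real.pi/2 := by
    rw [integral_Ioi_inv_one_add_sq]; simp
  unfold norm2
  rw [e1]
  apply Real.sqrt_le_iff.2 ⟨by positivity, ?_⟩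
  refine e2.trans ?_
  rw [e3, e4]
  have : Real.pi/2 * ∫ β in Ioo (0:ℝ) (Real.pi/2), S β ≤ 2 * 400 := by
    have := Real.pi_pos
    have h4 := Real.pi_le_four
    calc _ ≤ Real.pi/2 * 400 := by gcongr
      _ ≤ _ := by linarith
  have hA2 := sq_nonneg A
  nlinarith

lemma weight_cont (s : ℝ) :
    ContinuousOn (Function.uncurry (fun R β : ℝ => (1+R)^4 / R^4 * Real.sin (2*β) ^ s)) Qdom := by
  refine ContinuousOn.mul (ContinuousOn.div (by fun_prop) (by fun_prop) ?_) ?_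
  · rintro ⟨R, β⟩ ⟨hR, hβ⟩
    exact pow_ne_zero 4 (ne_of_gt hR)
  · refine ContinuousOn.rpow_const (by fun_prop) ?_
    rintro ⟨R, β⟩ ⟨hR, hβ⟩
    exact Or.inl (ne_of_gt (sin_pos' hβ))

lemma weight_nonneg (s : ℝ) : ∀ R ∈ Ioi (0:ℝ), ∀ β ∈ Ioo (0:ℝ) (Real.pi/2),
    0 ≤ (1+R)^4 / R^4 * Real.sin (2*β) ^ s := by
  intro R hR β hβ
  have : (0:ℝ) < R := hR
  have := sin_pos' hβ
  positivity

lemma vR_weight {R : ℝ} (hR : 0 < R) : vR R ^ 2 * ((1+R)^4/R^4) = ((1+R)^2)⁻¹ := by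
  unfold vR
  field_simp

lemma vR_mul {R : ℝ} (hR : 0 < R) (y : ℝ) : y = vR R * ((1+R)^3/R^2 * y) := by
  unfold vR
  field_simp

/-- first family of terms -/
lemma part1 (k : ℕ) (hk : k ≤ 3) : ∃ C : ℝ, 0 ≤ C ∧ ∀ α : ℝ, 0 < α → α ≤ 1/1000 →
    ∀ f : ℝ → ℝ → ℝ, ContDiffOn ℝ 3 (Function.uncurry f) Qdom →
      WFin α 3 (fun R β => (1+R)^3/R^2 * f R β) →
      Integrable2 (fun R β => (DR^[k] f R β)^2 * phi1 R β) ∧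
      norm2 (fun R β => DR^[k] f R β * Real.sqrt (phi1 R β)) ≤
        C * Wnorm α 3 (fun R β => (1+R)^3/R^2 * f R β) := by
  obtain ⟨C, hC, hL⟩ := leibniz1 k
  refine ⟨40 * C, by positivity, fun α hα hα1 f hf hW => ?_⟩
  set F : ℝ → ℝ → ℝ := fun R β => (1+R)^3/R^2 * f R β with hF
  set W := Wnorm α 3 F with hWdef
  have hsum2 : 0 ≤ ∑ p ∈ (Finset.range (3+1) ×ˢ Finset.range (3+1)).filter
      (fun p => p.1 + p.2 ≤ 3 ∧ 1 ≤ p.2),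
      supDom (fun R β => Real.sin (2*β) ^ (-(α/5)) *
        DR^[p.1] (fun R' β' => Dbeta^[p.2] F R' β' / (α/10 + Real.sin (2*β'))) R β) :=
    Finset.sum_nonneg (fun _ _ => supDom_nonneg _)
  have hterm : ∀ i ≤ 3, supDom (DR^[i] F) ≤ W := by
    intro i hi
    have := Finset.single_le_sum (f := fun i => supDom (DR^[i] F)) (s := Finset.range (3+1))
      (fun _ _ => supDom_nonneg _) (Finset.mem_range.2 (Nat.lt_succ_of_le hi))
    rw [hWdef]; unfold Wnorm
    linarith
  have hW0 : 0 ≤ W := (supDom_nonneg _).trans (hterm 0 (by norm_num))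
  have hFc : ContDiffOn ℝ 3 (Function.uncurry F) Qdom := by
    refine ContDiffOn.mul (ContDiffOn.div (by fun_prop) (by fun_prop) ?_) hf
    rintro ⟨R, β⟩ ⟨hR, hβ⟩
    exact pow_ne_zero 2 (ne_of_gt hR)
  have hpt : ∀ R ∈ Ioi (0:ℝ), ∀ β ∈ Ioo (0:ℝ) (Real.pi/2),
      |DR^[k] f R β| ≤ C * vR R * W := by
    intro R hR β hβ
    rw [DR_iter_slice, DR1_iter_congr k (h := fun r => vR r * F r β)
      (fun r hr => vR_mul hr (f r β)) R hR]
    have hsl : ContDiffOn ℝ k (fun r => F r β) (Ioi 0) :=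
      (slice_contDiff (n := 3) hFc hβ).of_le (by exact_mod_cast hk)
    refine hL _ hsl R hR W (fun i hi => ?_)
    rw [← DR_iter_slice]
    exact (le_supDom_s17 (hW.1 i (hi.trans hk)) hR hβ).trans (hterm i (hi.trans hk))
  have hcont : ContinuousOn (Function.uncurry (DR^[k] f)) Qdom := by
    refine (DR_iter_contDiff k 0 (hf.of_le ?_)).continuousOn
    exact_mod_cast (by omega : 0 + k ≤ 3)
  have hm := maj_int (s := 1/100) (by norm_num) (by norm_num)
  have hres := basic (DR^[k] f) phi1
    (fun β => β ^ ((1/100:ℝ)-1) + (Real.pi/2 - β) ^ ((1/100:ℝ)-1)) (C * W) (by positivity)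
    hcont (weight_cont _) (weight_nonneg _) hm.1 (hm.2.trans (by norm_num)) ?_ ?_
  · refine ⟨hres.1, hres.2.trans (le_of_eq (by ring))⟩
  · intro β hβ
    have h0 := hβ.1
    have h1 : 0 < Real.pi/2 - β := by linarith [hβ.2]
    positivity
  · intro R hR β hβ
    have hR' : (0:ℝ) < R := hR
    have hs := sin_pos' hβ
    have h1 : (DR^[k] f R β)^2 ≤ (C * vR R * W)^2 := by
      rw [← sq_abs]
      exact pow_le_pow_left₀ (abs_nonneg _) (hpt R hR β hβ) 2
    have h2 := sin_rpow_le (s := 1/100) (by norm_num) hβ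
    have h3 : Real.sin (2*β) ^ (-(99/100 : ℝ)) = Real.sin (2*β) ^ ((1/100:ℝ) - 1) := by
      norm_num
    unfold phi1
    rw [h3]
    calc _ ≤ (C * vR R * W)^2 * ((1+R)^4/R^4 * Real.sin (2*β) ^ ((1/100:ℝ) - 1)) := by gcongr
      _ = (C*W)^2 * ((vR R ^ 2 * ((1+R)^4/R^4)) * Real.sin (2*β) ^ ((1/100:ℝ) - 1)) := by ring
      _ = (C*W)^2 * (((1+R)^2)⁻¹ * Real.sin (2*β) ^ ((1/100:ℝ) - 1)) := by rw [vR_weight hR']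
      _ ≤ _ := by gcongr

/-- second family of terms -/
lemma part2 (i j : ℕ) (hij : i + j + 1 ≤ 3) : ∃ C : ℝ, 0 ≤ C ∧ ∀ α : ℝ, 0 < α → α ≤ 1/1000 →
    ∀ f : ℝ → ℝ → ℝ, ContDiffOn ℝ 3 (Function.uncurry f) Qdom →
      WFin α 3 (fun R β => (1+R)^3/R^2 * f R β) →
      Integrable2 (fun R β => (DR^[i] (Dbeta^[j+1] f) R β)^2 * phi2 α R β) ∧
      norm2 (fun R β => DR^[i] (Dbeta^[j+1] f) R β * Real.sqrt (phi2 α R β)) ≤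
        C * Wnorm α 3 (fun R β => (1+R)^3/R^2 * f R β) := by
  obtain ⟨C, hC, hL⟩ := leibniz1 i
  refine ⟨40 * C, by positivity, fun α hα hα1 f hf hW => ?_⟩
  set F : ℝ → ℝ → ℝ := fun R β => (1+R)^3/R^2 * f R β with hF
  set W := Wnorm α 3 F with hWdef
  set G : ℝ → ℝ → ℝ := fun R' β' => Dbeta^[j+1] F R' β' / (α/10 + Real.sin (2*β')) with hG
  have hsum1 : 0 ≤ ∑ k ∈ Finset.range (3+1), supDom (DR^[k] F) :=
    Finset.sum_nonneg (fun _ _ => supDom_nonneg _)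
  have hterm : ∀ k ≤ i, supDom (fun R β => Real.sin (2*β) ^ (-(α/5)) * DR^[k] G R β) ≤ W := by
    intro k hk
    have := Finset.single_le_sum (f := fun p : ℕ × ℕ =>
      supDom (fun R β => Real.sin (2*β) ^ (-(α/5)) *
        DR^[p.1] (fun R' β' => Dbeta^[p.2] F R' β' / (α/10 + Real.sin (2*β'))) R β))
      (s := (Finset.range (3+1) ×ˢ Finset.range (3+1)).filter
      (fun p => p.1 + p.2 ≤ 3 ∧ 1 ≤ p.2)) (a := (k, j+1))
      (fun _ _ => supDom_nonneg _) (by simp; omega)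
    rw [hWdef]; unfold Wnorm
    dsimp only at this
    linarith
  have hW0 : 0 ≤ W := (supDom_nonneg _).trans (hterm 0 (by omega))
  have hFc : ContDiffOn ℝ 3 (Function.uncurry F) Qdom := by
    refine ContDiffOn.mul (ContDiffOn.div (by fun_prop) (by fun_prop) ?_) hf
    rintro ⟨R, β⟩ ⟨hR, hβ⟩
    exact pow_ne_zero 2 (ne_of_gt hR)
  have hpt : ∀ R ∈ Ioi (0:ℝ), ∀ β ∈ Ioo (0:ℝ) (Real.pi/2),
      |DR^[i] (Dbeta^[j+1] f) R β| ≤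
        (α/10 + Real.sin (2*β)) * (C * vR R * (Real.sin (2*β) ^ (α/5) * W)) := by
    intro R hR β hβ
    have hs := sin_pos' hβ
    have hd : 0 < α/10 + Real.sin (2*β) := by positivity
    have hDF : Dbeta^[j+1] F = fun R β => (1+R)^3/R^2 * Dbeta^[j+1] f R β :=
      Dbeta_iter_mul (j+1) (fun R => (1+R)^3/R^2) f
    rw [DR_iter_slice, DR1_iter_congr i
      (h := fun r => (α/10 + Real.sin (2*β)) * (vR r * G r β)) ?_ R hR]
    · rw [DR1_iter_const_mul, abs_mul, abs_of_pos hd]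
      have hsl : ContDiffOn ℝ i (fun r => G r β) (Ioi 0) := by
        have h1 : ContDiffOn ℝ i (Function.uncurry (Dbeta^[j+1] F)) Qdom := by
          refine Dbeta_iter_contDiff (j+1) i (hFc.of_le ?_)
          exact_mod_cast (by omega : i + (j+1) ≤ 3)
        exact (slice_contDiff h1 hβ).div_const _
      refine mul_le_mul_of_nonneg_left (hL _ hsl R hR _ (fun k hk => ?_)) hd.le
      rw [← DR_iter_slice]
      have hb := (le_supDom_s17 (hW.2 k (j+1) (by omega) (by omega)) hR hβ).trans (hterm k hk)
      rw [abs_mul, abs_of_pos (Real.rpow_pos_of_pos hs _)] at hb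
      have hp := Real.rpow_pos_of_pos hs (α/5)
      have e : Real.sin (2*β) ^ (α/5) * Real.sin (2*β) ^ (-(α/5)) = 1 := by
        rw [← Real.rpow_add hs]; simp
      calc |DR^[k] G R β| = Real.sin (2*β) ^ (α/5) *
            (Real.sin (2*β) ^ (-(α/5)) * |DR^[k] G R β|) := by rw [← mul_assoc, e, one_mul]
        _ ≤ _ := mul_le_mul_of_nonneg_left hb hp.le
    · intro r hr
      simp only [hG, hDF]
      have := vR_mul hr (Dbeta^[j+1] f r β)
      field_simp
      field_simp at this
      linarith
  have hcont : ContinuousOn (Function.uncurry (DR^[i] (Dbeta^[j+1] f))) Qdom := by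
    refine (DR_iter_contDiff i 0 ?_).continuousOn
    refine Dbeta_iter_contDiff (j+1) (0+i) (hf.of_le ?_)
    exact_mod_cast (by omega : 0 + i + (j+1) ≤ 3)
  have hm := maj_int (s := 3*α/10) (by positivity) (by linarith)
  have hone : IntegrableOn (fun _ : ℝ => (2:ℝ)) (Ioo (0:ℝ) (Real.pi/2)) :=
    integrableOn_const (by simp)
  have hSint : IntegrableOn (fun β : ℝ => (2*(α/10)^2) *
      (β ^ (3*α/10-1) + (Real.pi/2 - β) ^ (3*α/10-1)) + 2) (Ioo (0:ℝ) (Real.pi/2)) := by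
    have := Integrable.add (hm.1.const_mul (2*(α/10)^2)) hone
    exact this
  have hres := basic (DR^[i] (Dbeta^[j+1] f)) (phi2 α)
    (fun β => (2*(α/10)^2) * (β ^ (3*α/10-1) + (Real.pi/2 - β) ^ (3*α/10-1)) + 2)
    (C * W) (by positivity)
    hcont (weight_cont _) (weight_nonneg _) hSint ?_ ?_ ?_
  · refine ⟨hres.1, hres.2.trans (le_of_eq (by ring))⟩
  · rw [integral_add (hm.1.const_mul _) hone, integral_const_mul]
    have h1 : (2*(α/10)^2) * ∫ β in Ioo (0:ℝ) (Real.pi/2),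
        (β ^ (3*α/10-1) + (Real.pi/2 - β) ^ (3*α/10-1)) ≤ (2*(α/10)^2) * (4/(3*α/10)) :=
      mul_le_mul_of_nonneg_left hm.2 (by positivity)
    have h2 : (2*(α/10)^2) * (4/(3*α/10)) = 4/15 * α := by field_simp; norm_num
    have h3 : ∫ _ in Ioo (0:ℝ) (Real.pi/2), (2:ℝ) = Real.pi := by
      have := Real.pi_pos
      simp only [integral_const, Measure.real, Measure.restrict_apply_univ, Real.volume_Ioo]
      rw [ENNReal.toReal_ofReal (by linarith), smul_eq_mul]
      ring
    rw [h3]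
    linarith [Real.pi_le_four]
  · intro β hβ
    have h0 := hβ.1
    have h1 : 0 < Real.pi/2 - β := by linarith [hβ.2]
    positivity
  · intro R hR β hβ
    have hR' : (0:ℝ) < R := hR
    have hs := sin_pos' hβ
    have hs1 : Real.sin (2*β) ≤ 1 := Real.sin_le_one _
    set x := Real.sin (2*β) with hx
    have h1 : (DR^[i] (Dbeta^[j+1] f) R β)^2 ≤
        ((α/10 + x) * (C * vR R * (x ^ (α/5) * W)))^2 := by
      rw [← sq_abs]
      exact pow_le_pow_left₀ (abs_nonneg _) (hpt R hR β hβ) 2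
    have h2 := sin_rpow_le (s := 3*α/10) (by linarith) hβ
    rw [← hx] at h2
    have h3 : (x ^ (α/5))^2 * x ^ (-(1+α/10)) = x ^ (3*α/10 - 1) := by
      rw [← Real.rpow_natCast, ← Real.rpow_mul hs.le, ← Real.rpow_add hs]
      congr 1; push_cast; ring
    have h4 : x^2 * x ^ (3*α/10 - 1) ≤ 1 := by
      rw [← Real.rpow_natCast, ← Real.rpow_add hs]
      exact Real.rpow_le_one hs.le hs1 (by push_cast; linarith)
    have hp : 0 < x ^ (3*α/10 - 1) := Real.rpow_pos_of_pos hs _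
    have h5 : (α/10 + x)^2 * x ^ (3*α/10 - 1) ≤
        (2*(α/10)^2) * (β ^ (3*α/10-1) + (Real.pi/2 - β) ^ (3*α/10-1)) + 2 := by
      calc (α/10 + x)^2 * x ^ (3*α/10 - 1)
          ≤ (2*(α/10)^2 + 2*x^2) * x ^ (3*α/10 - 1) := by
            gcongr; nlinarith [sq_nonneg (α/10 - x)]
        _ = (2*(α/10)^2) * x ^ (3*α/10 - 1) + 2 * (x^2 * x ^ (3*α/10 - 1)) := by ring
        _ ≤ (2*(α/10)^2) * (β ^ (3*α/10-1) + (Real.pi/2 - β) ^ (3*α/10-1)) + 2 * 1 := by gcongr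
        _ = _ := by ring
    unfold phi2
    rw [← hx]
    calc _ ≤ ((α/10 + x) * (C * vR R * (x ^ (α/5) * W)))^2 *
            ((1+R)^4/R^4 * x ^ (-(1+α/10))) := by gcongr
      _ = (C*W)^2 * ((vR R ^ 2 * ((1+R)^4/R^4)) * ((α/10 + x)^2 *
            ((x ^ (α/5))^2 * x ^ (-(1+α/10))))) := by ring
      _ = (C*W)^2 * (((1+R)^2)⁻¹ * ((α/10 + x)^2 * x ^ (3*α/10 - 1))) := by
            rw [vR_weight hR', h3]
      _ ≤ _ := by gcongr

/-- the embedding `‖f‖_{H³} ≲ ‖((1+R)³/R²) f‖_{W^{3,∞}}`. -/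
theorem W3infty_embeds_into_H3 :
    ∃ C : ℝ, ∀ α : ℝ, 0 < α → α ≤ 1/1000 →
      ∀ f : ℝ → ℝ → ℝ,
        ContDiffOn ℝ 3 (Function.uncurry f) Qdom →
        WFin α 3 (fun R β => (1+R)^3/R^2 * f R β) →
        (∀ k ≤ 3, Integrable2 (fun R β => (DR^[k] f R β)^2 * phi1 R β)) ∧
        (∀ i j : ℕ, i + j + 1 ≤ 3 →
          Integrable2 (fun R β => (DR^[i] (Dbeta^[j+1] f) R β)^2 * phi2 α R β)) ∧
        Hnorm 3 phi1 (phi2 α) f ≤ C * Wnorm α 3 (fun R β => (1+R)^3/R^2 * f R β) := by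
  choose c1 hc1 h1 using part1
  choose c2 hc2 h2 using part2
  refine ⟨(∑ k ∈ Finset.range (3+1), if h : k ≤ 3 then c1 k h else 0) +
    ∑ p ∈ (Finset.range (3+1) ×ˢ Finset.range (3+1)).filter
      (fun p => p.1 + p.2 + 1 ≤ 3), if h : p.1 + p.2 + 1 ≤ 3 then c2 p.1 p.2 h else 0, ?_⟩
  intro α hα hα1 f hf hW
  refine ⟨fun k hk => (h1 k hk α hα hα1 f hf hW).1,
    fun i j hij => (h2 i j hij α hα hα1 f hf hW).1, ?_⟩
  unfold Hnorm
  rw [add_mul, Finset.sum_mul, Finset.sum_mul]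
  refine add_le_add (Finset.sum_le_sum fun k hk => ?_) (Finset.sum_le_sum fun p hp => ?_)
  · have hk' : k ≤ 3 := Nat.lt_succ_iff.1 (Finset.mem_range.1 hk)
    rw [dif_pos hk']
    exact (h1 k hk' α hα hα1 f hf hW).2
  · have hp' := (Finset.mem_filter.1 hp).2
    rw [dif_pos hp']
    exact (h2 p.1 p.2 hp' α hα hα1 f hf hW).2

end Paper
end
end
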